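/- Let Ω ⊂ ℝ^N (N ≥ 3) be a bounded open set with C² boundary and suppose Φ, Φ₀, G, K, W := Φ/Φ₀ satisfy all of the hypotheses (H1)–(H7) listed in the context. Let τ be a positive Borel measure on Ω with ∫_Ω Φ dτ < ∞, let ν be a finite positive Borel measure on ∂Ω, and let u : Ω → [0,∞) be a Borel function such that u(x) + ∫_Ω G(x,y) dτ(y) = ∫_{∂Ω} K(x,y) dν(y) for every x ∈ Ω. Then there exists C ≥ 1, independent of u, τ, ν, such that C⁻¹ ν(∂Ω) ≤ ∫_Ω W(x) u(x) dx + ∫_Ω Φ dτ ≤ C ν(∂Ω). -/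

import Mathlib

open MeasureTheory Metric Set ENNReal

/-- `Ω` has `C²` boundary: near each boundary point, `Ω` coincides with the strict
sublevel set of a `C²` function with nonvanishing derivative. -/
def HasC2Boundary {N : ℕ} (Ω : Set (EuclideanSpace ℝ (Fin N))) : Prop :=
  ∀ p ∈ frontier Ω, ∃ (U : Set (EuclideanSpace ℝ (Fin N)))
    (f : EuclideanSpace ℝ (Fin N) → ℝ),
    IsOpen U ∧ p ∈ U ∧ ContDiffOn ℝ 2 f U ∧ (∀ x ∈ U, fderiv ℝ f x ≠ 0) ∧
    Ω ∩ U = {x ∈ U | f x < 0}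

/-!
Integrating the representation of `u` against `W ∼ Φ / δ` and exchanging the order of integration
reduces the estimate to two comparisons: `∫_Ω W(x) G(x, y) dx ∼ Φ(y)` for `y` in `Ω`, and
`∫_Ω W(x) K(x, y) dx ∼ 1` for `y` on the boundary.

The upper bounds near the boundary come from slicing along the level sets `Σ_β` of `δ`. By a uniform
interior cone condition, `δ` grows linearly along a fixed direction near each boundary point, so the
projection along that direction is a bi-Lipschitz chart of every `Σ_β` there. Hence a coarea
inequality holds, and a ball of radius `r` has measure at most a multiple of `r ^ (N - 1)` on every
`Σ_β`. For `K` this makes the hypothesis on `∫_{Σ_β} W K(·, y)` integrable in `β`. For `G`, the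
Green estimates give
`W(x) G(x, y) ≲ (|x - y| ^ (1 - N) + δ(x) ^ (θ - 1) |x - y| ^ (θ + 1 - N)) Φ(y)` with
`θ = α* - α + 1 / 2 > 0`; the first term is a Riesz kernel, and the second one is integrated first
over `Σ_β`, then against `β ^ (θ - 1) dβ`.

The lower bounds are local in `y` and extend by compactness: near each point of `closure Ω` (for
`G`) or of the boundary (for `K`), the integrand is bounded below on one fixed small ball in `Ω`.
-/

open Filter Topology Module
open scoped NNReal

section InteriorCones

variable {E : Type*} [NormedAddCommGroup E] [NormedSpace ℝ E]

/-- `Ω` has `C¹` boundary: near each boundary point, `Ω` coincides with the strict sublevel set of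
a `C¹` function with nonvanishing derivative. -/
def HasC1Boundary (Ω : Set E) : Prop :=
  ∀ p ∈ frontier Ω, ∃ (U : Set E) (f : E → ℝ),
    IsOpen U ∧ p ∈ U ∧ ContDiffOn ℝ 1 f U ∧ (∀ x ∈ U, fderiv ℝ f x ≠ 0) ∧
    Ω ∩ U = {x ∈ U | f x < 0}

theorem HasC2Boundary.hasC1Boundary {N : ℕ} {Ω : Set (EuclideanSpace ℝ (Fin N))}
    (h : HasC2Boundary Ω) : HasC1Boundary Ω := fun p hp => by
  obtain ⟨U, f, hU, hpU, hf, hf', hΩU⟩ := h p hp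
  exact ⟨U, f, hU, hpU, hf.of_le (by norm_num), hf', hΩU⟩

/-- The uniform interior cone condition on the window `V`: the cone `{y | L (y - x) ≤ -κ ‖y - x‖}`,
with its vertex `x` in the closure of `Ω` removed, lies in `Ω` as far as `V` is concerned. The
functional `L` points outwards. -/
def InteriorConeOn (Ω : Set E) (L : E →L[ℝ] ℝ) (κ : ℝ) (V : Set E) : Prop :=
  ∀ x ∈ closure Ω ∩ V, ∀ y ∈ V, y ≠ x → L (y - x) ≤ -κ * ‖y - x‖ → y ∈ Ω

theorem HasC1Boundary.exists_interiorConeOn {Ω : Set E} (hΩ : HasC1Boundary Ω) {p : E}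
    (hp : p ∈ frontier Ω) :
    ∃ L : E →L[ℝ] ℝ, L ≠ 0 ∧ ∀ κ > 0, ∃ R > 0, InteriorConeOn Ω L κ (ball p R) := by
  obtain ⟨U, f, hU, hpU, hf, hf', hΩU⟩ := hΩ p hp
  refine ⟨fderiv ℝ f p, hf' p hpU, fun κ hκ => ?_⟩
  have hst : HasStrictFDerivAt f (fderiv ℝ f p) p :=
    (hf.contDiffAt (hU.mem_nhds hpU)).hasStrictFDerivAt one_ne_zero
  have hlin := hst.isLittleO.def (half_pos hκ)
  rw [nhds_prod_eq, eventually_prod_self_iff'] at hlin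
  obtain ⟨t, ht, hlin⟩ := hlin
  obtain ⟨R, hR, hRt⟩ := Metric.mem_nhds_iff.1 (inter_mem ht (hU.mem_nhds hpU))
  refine ⟨R, hR, fun x ⟨hxΩ, hx⟩ y hy hne hL => ?_⟩
  have hxU : x ∈ U := (hRt hx).2
  have hfx : f x ≤ 0 := by
    have hcl : x ∈ closure (Ω ∩ U) := by
      rw [inter_comm]
      exact hU.inter_closure ⟨hxU, hxΩ⟩
    have hcont := (hf.contDiffAt (hU.mem_nhds hxU)).continuousAt.continuousWithinAt (s := Ω ∩ U)
    have hmem := hcont.mem_closure hcl (t := Iic 0) fun z hz => (hΩU ▸ hz).2.le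
    rwa [closure_Iic] at hmem
  have hdiff := (abs_le.1 (hlin y (hRt hy).1 x (hRt hx).1)).2
  have hpos : 0 < ‖y - x‖ := norm_pos_iff.2 (sub_ne_zero.2 hne)
  have hy : y ∈ Ω ∩ U := hΩU ▸ ⟨(hRt hy).2, by nlinarith⟩
  exact hy.1

theorem div_lt_one_of_apply_le {L : E →L[ℝ] ℝ} {κ κ' : ℝ} (hκ : 0 < κ) {w : E} (hw0 : w ≠ 0)
    (hw : L w ≤ -κ' * ‖w‖) : (κ' - κ) / (‖L‖ + κ) < 1 := by
  have hLw : -L w ≤ ‖L‖ * ‖w‖ := (neg_le_abs _).trans (L.le_opNorm _)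
  have hκL : κ' ≤ ‖L‖ := le_of_mul_le_mul_right (by linarith) (norm_pos_iff.2 hw0)
  rw [div_lt_one (by positivity)]
  linarith

theorem apply_le_of_norm_sub_le {L : E →L[ℝ] ℝ} {κ κ' : ℝ} (hκ : 0 < κ) {v w : E}
    (hw : L w ≤ -κ' * ‖w‖) (hvw : ‖v - w‖ ≤ (κ' - κ) / (‖L‖ + κ) * ‖w‖) :
    L v ≤ -κ * ‖v‖ := by
  set θ := (κ' - κ) / (‖L‖ + κ)
  have hθL : θ * (‖L‖ + κ) = κ' - κ := div_mul_cancel₀ _ (by positivity)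
  have hv : w + (v - w) = v := add_sub_cancel w v
  have hLv : L (v - w) ≤ ‖L‖ * (θ * ‖w‖) :=
    (le_abs_self _).trans ((L.le_opNorm _).trans (by gcongr))
  have hnorm : κ * ‖v‖ ≤ κ * (‖w‖ + θ * ‖w‖) := by
    gcongr
    exact hv ▸ norm_add_le_of_le le_rfl hvw
  rw [← hv, map_add, hv]
  linear_combination hw + hLv + hnorm + ‖w‖ * hθL

theorem exists_norm_lt_one_apply_lt_neg {L : E →L[ℝ] ℝ} {r : ℝ} (hr : r < ‖L‖) :
    ∃ e, ‖e‖ < 1 ∧ L e < -r := by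
  obtain ⟨e, he, hLe⟩ := L.exists_lt_apply_of_lt_opNorm hr
  rcases lt_abs.1 hLe with h | h
  · exact ⟨-e, by rwa [norm_neg], by rwa [map_neg, neg_lt_neg_iff]⟩
  · exact ⟨e, he, lt_neg_of_lt_neg h⟩

theorem infDist_frontier_pos {X : Type*} [PseudoMetricSpace X] {Ω : Set X} (ho : IsOpen Ω)
    (hne : (frontier Ω).Nonempty) {x : X} (hx : x ∈ Ω) : 0 < infDist x (frontier Ω) := by
  rw [← isClosed_frontier.notMem_iff_infDist_pos hne, ho.frontier_eq]
  exact fun h => h.2 hx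

variable [FiniteDimensional ℝ E]

theorem ball_infDist_frontier_subset {Ω : Set E} {x : E} (hx : x ∈ Ω) :
    ball x (infDist x (frontier Ω)) ⊆ Ω := by
  rcases eq_or_ne Ω univ with rfl | hΩ
  · exact subset_univ _
  · obtain ⟨q, hq, hxq⟩ := exists_mem_frontier_infDist_compl_eq_dist hx hΩ
    exact (ball_subset_ball (hxq ▸ infDist_le_dist_of_mem hq)).trans ball_infDist_compl_subset

theorem closedBall_infDist_frontier_subset_closure {Ω : Set E} {x : E} (hx : x ∈ closure Ω) :
    closedBall x (infDist x (frontier Ω)) ⊆ closure Ω := by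
  rcases eq_or_ne (infDist x (frontier Ω)) 0 with h0 | h0
  · rw [h0, closedBall_zero]
    exact singleton_subset_iff.2 hx
  · have hxΩ : x ∈ Ω := by
      by_contra h
      exact h0 (infDist_zero_of_mem ⟨hx, fun hi => h (interior_subset hi)⟩)
    rw [← closure_ball x h0]
    exact closure_mono (ball_infDist_frontier_subset hxΩ)

theorem InteriorConeOn.add_mem {Ω V : Set E} {L : E →L[ℝ] ℝ} {κ : ℝ}
    (hcone : InteriorConeOn Ω L κ V) {x z v : E} (hx : x ∈ closure Ω)
    (hz : z ∈ closedBall x (infDist x (frontier Ω))) (hzV : z ∈ V) (hvV : z + v ∈ V)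
    (hv0 : v ≠ 0) (hv : L v ≤ -κ * ‖v‖) : z + v ∈ Ω :=
  hcone z ⟨closedBall_infDist_frontier_subset_closure hx hz, hzV⟩ _ hvV (by simpa)
    (by rwa [add_sub_cancel_left])

-- Translating the ball of radius `infDist x (frontier Ω)` around `x` along the cone keeps it
-- inside `Ω`; this is why the distance to the boundary grows linearly along the cone.
theorem InteriorConeOn.infDist_frontier_add_le {Ω : Set E} (ho : IsOpen Ω) {p : E}
    (hp : p ∈ frontier Ω) {L : E →L[ℝ] ℝ} {κ κ' r : ℝ} (hκ : 0 < κ) (hκ' : κ < κ')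
    (hcone : InteriorConeOn Ω L κ (ball p (4 * r))) {x y : E} (hxΩ : x ∈ closure Ω)
    (hx : x ∈ ball p r) (hy : y ∈ ball p r) (hxy : L (y - x) ≤ -κ' * ‖y - x‖) :
    infDist x (frontier Ω) + (κ' - κ) / (‖L‖ + κ) * ‖y - x‖ ≤ infDist y (frontier Ω) := by
  rcases eq_or_ne y x with rfl | hne
  · simp
  have hne' : y - x ≠ 0 := sub_ne_zero.2 hne
  have hw : 0 < ‖y - x‖ := norm_pos_iff.2 hne'
  have hθ1 := div_lt_one_of_apply_le hκ hne' hxy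
  have hθ0 : 0 ≤ (κ' - κ) / (‖L‖ + κ) := div_nonneg (by linarith) (by positivity)
  rw [mem_ball] at hx hy
  have hwr : ‖y - x‖ < 2 * r := by
    rw [← dist_eq_norm]
    linarith [dist_triangle_right y x p]
  have hδx : infDist x (frontier Ω) < r := (infDist_le_dist_of_mem hp).trans_lt hx
  rw [le_infDist ⟨p, hp⟩]
  intro q hq
  by_contra! hlt
  obtain ⟨m, hym, hmq⟩ := exists_dist_le_le (by positivity) infDist_nonneg hlt.le
  rw [dist_comm, dist_eq_norm] at hym
  have hcenter : m - x - (y - x) = m - y := by abel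
  have hLm : L (m - x) ≤ -κ * ‖m - x‖ := apply_le_of_norm_sub_le hκ hxy (hcenter ▸ hym)
  have hmx0 : m - x ≠ 0 := by
    intro h0
    rw [← hcenter, h0, zero_sub, norm_neg] at hym
    nlinarith
  have hvertex : q - (m - x) + (m - x) = q := sub_add_cancel _ _
  have hdist : dist (q - (m - x)) x = dist m q := by
    rw [dist_comm m, dist_eq_norm, dist_eq_norm]
    congr 1
    abel
  have hqΩ := hcone.add_mem (z := q - (m - x)) hxΩ (by rwa [mem_closedBall, hdist])
    (by
      rw [mem_ball]
      linarith [dist_triangle (q - (m - x)) x p, infDist_nonneg (x := x) (s := frontier Ω)])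
    (by
      rw [hvertex, mem_ball]
      nlinarith [dist_triangle_left q p y]) hmx0 hLm
  rw [hvertex] at hqΩ
  exact (ho.frontier_eq ▸ hq).2 hqΩ

theorem InteriorConeOn.mul_dist_le_dist_infDist_frontier {Ω : Set E} (ho : IsOpen Ω) {p : E}
    (hp : p ∈ frontier Ω) {L : E →L[ℝ] ℝ} {κ κ' r : ℝ} (hκ : 0 < κ) (hκ' : κ < κ')
    (hcone : InteriorConeOn Ω L κ (ball p (4 * r))) {x y : E} (hxΩ : x ∈ closure Ω)
    (hyΩ : y ∈ closure Ω) (hx : x ∈ ball p r) (hy : y ∈ ball p r)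
    (hxy : κ' * ‖y - x‖ ≤ |L (y - x)|) :
    (κ' - κ) / (‖L‖ + κ) * dist x y ≤
      dist (infDist x (frontier Ω)) (infDist y (frontier Ω)) := by
  wlog h : 0 ≤ L (y - x) generalizing x y
  · rw [dist_comm x, dist_comm (infDist x _)]
    refine this hyΩ hxΩ hy hx ?_ ?_
    · rwa [← neg_sub, map_neg, norm_neg, abs_neg]
    · rw [← neg_sub, map_neg]
      linarith
  rw [abs_of_nonneg h] at hxy
  have hgrowth := hcone.infDist_frontier_add_le ho hp hκ hκ' hyΩ hy hx (by
    rw [← neg_sub, map_neg, norm_neg]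
    linarith)
  rw [dist_eq_norm x, Real.dist_eq]
  exact le_abs.2 (.inl (by linarith))

theorem HasC1Boundary.exists_dist_lt_two_mul_infDist {Ω : Set E} (ho : IsOpen Ω)
    (hΩ : HasC1Boundary Ω) {p : E} (hp : p ∈ frontier Ω) {η : ℝ} (hη : 0 < η) :
    ∃ x ∈ Ω, infDist x (frontier Ω) < η ∧ dist x p < 2 * infDist x (frontier Ω) := by
  obtain ⟨L, hL, hcones⟩ := hΩ.exists_interiorConeOn hp
  have hL0 : 0 < ‖L‖ := norm_pos_iff.2 hL
  obtain ⟨R, hR, hcone⟩ := hcones (‖L‖ / 10) (by positivity)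
  obtain ⟨e, he, hLe⟩ := exists_norm_lt_one_apply_lt_neg (L := L) (r := 9 / 10 * ‖L‖)
    (by linarith)
  obtain ⟨t, ht, htη, htR⟩ : ∃ t : ℝ, 0 < t ∧ t ≤ η ∧ t ≤ R / 4 :=
    ⟨min η (R / 4), by positivity, min_le_left _ _, min_le_right _ _⟩
  have he0 : 0 < ‖e‖ := norm_pos_iff.2 fun h => by rw [h, map_zero] at hLe; linarith
  have hnorm : ‖p + t • e - p‖ = t * ‖e‖ := by
    rw [add_sub_cancel_left, norm_smul, Real.norm_of_nonneg ht.le]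
  have hLx : L (p + t • e - p) ≤ -(9 / 10 * ‖L‖) * ‖p + t • e - p‖ := by
    rw [hnorm, add_sub_cancel_left, map_smul, smul_eq_mul]
    nlinarith [mul_pos ht hL0]
  have hdist : dist (p + t • e) p < t := by
    rw [dist_eq_norm, hnorm]
    nlinarith
  have hgrowth := InteriorConeOn.infDist_frontier_add_le ho hp (κ := ‖L‖ / 10) (r := R / 4)
    (by positivity) (by linarith) (by rwa [mul_div_cancel₀ R four_ne_zero])
    (frontier_subset_closure hp) (mem_ball_self (by positivity))
    (hdist.trans_le htR) hLx
  have hθ : (9 / 10 * ‖L‖ - ‖L‖ / 10) / (‖L‖ + ‖L‖ / 10) = 8 / 11 := by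
    field_simp
    norm_num
  rw [infDist_zero_of_mem hp, zero_add, hθ, hnorm] at hgrowth
  refine ⟨p + t • e, ?_, ?_, ?_⟩
  · refine hcone p ⟨frontier_subset_closure hp, mem_ball_self hR⟩ _ ?_ ?_ ?_
    · rw [mem_ball]
      linarith
    · rw [← sub_ne_zero, ← norm_pos_iff, hnorm]
      positivity
    · nlinarith [norm_nonneg (p + t • e - p)]
  · linarith [infDist_le_dist_of_mem (x := p + t • e) hp]
  · rw [dist_eq_norm, hnorm]
    nlinarith [mul_pos ht he0]

theorem exists_norm_le_add_mul_abs {L : E →L[ℝ] ℝ} (hL : L ≠ 0) :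
    ∃ (F : Submodule ℝ E) (T : E →L[ℝ] F), finrank ℝ F + 1 = finrank ℝ E ∧
      ∃ M > 0, ∀ w, ‖w‖ ≤ ‖T w‖ + M * |L w| := by
  obtain ⟨v, hv⟩ := ContinuousLinearMap.exists_ne_zero hL
  set e := (L v)⁻¹ • v with he
  have hLe : L e = 1 := by rw [he, map_smul, smul_eq_mul, inv_mul_cancel₀ hv]
  have he0 : 0 < ‖e‖ := norm_pos_iff.2 fun h => by simp [h] at hLe
  refine ⟨_, L.projKerOfRightInverse (ContinuousLinearMap.toSpanSingleton ℝ e)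
    (fun c => by simp [hLe]), Dual.finrank_ker_add_one_of_ne_zero (by exact_mod_cast hL),
    ‖e‖, he0, fun w => ?_⟩
  rw [Submodule.coe_norm, ContinuousLinearMap.coe_projKerOfRightInverse_apply,
    ContinuousLinearMap.toSpanSingleton_apply, mul_comm, ← Real.norm_eq_abs, ← norm_smul]
  exact norm_le_norm_sub_add _ _

/-- Either the projection `T` along a transversal direction separates `x` from `y`, or `y - x` lies
in a cone along which the distance to the boundary grows. -/
theorem HasC1Boundary.exists_antilipschitzWith_infDist_prod {Ω : Set E} (ho : IsOpen Ω)
    (hΩ : HasC1Boundary Ω) {p : E} (hp : p ∈ frontier Ω) :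
    ∃ (F : Submodule ℝ E) (T : E →L[ℝ] F), finrank ℝ F + 1 = finrank ℝ E ∧ ∃ r > 0, ∃ K : ℝ≥0,
      AntilipschitzWith K
        ((Ω ∩ ball p r).domRestrict fun x => (infDist x (frontier Ω), T x)) := by
  obtain ⟨L, hL, hcones⟩ := hΩ.exists_interiorConeOn hp
  obtain ⟨F, T, hF, M, hM, hT⟩ := exists_norm_le_add_mul_abs hL
  set κ := 1 / (4 * M) with hκ
  have hκ0 : 0 < κ := by positivity
  obtain ⟨R, hR, hcone⟩ := hcones κ hκ0
  set θ := (2 * κ - κ) / (‖L‖ + κ)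
  have hθ0 : 0 < θ := div_pos (by linarith) (by positivity)
  have hflat : ∀ x y, |L (y - x)| ≤ 2 * κ * ‖y - x‖ → dist x y ≤ 2 * dist (T x) (T y) := by
    intro x y hxy
    have h := (hT (y - x)).trans (add_le_add_right (mul_le_mul_of_nonneg_left hxy hM.le) _)
    have hMκ : M * (2 * κ * ‖y - x‖) = ‖y - x‖ / 2 := by
      rw [hκ]
      field_simp
      norm_num
    rw [hMκ, map_sub] at h
    rw [dist_comm, dist_comm (T x), dist_eq_norm, dist_eq_norm]
    linarith
  refine ⟨F, T, hF, R / 4, by positivity, (max 2 θ⁻¹).toNNReal,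
    AntilipschitzWith.of_le_mul_dist fun ⟨x, hx⟩ ⟨y, hy⟩ => ?_⟩
  rw [Real.coe_toNNReal _ (by positivity), Subtype.dist_eq, Prod.dist_eq]
  simp only [domRestrict_apply]
  rcases le_or_gt |L (y - x)| (2 * κ * ‖y - x‖) with h | h
  · exact (hflat x y h).trans (by gcongr <;> simp)
  refine le_trans ?_ (b := θ⁻¹ * dist (infDist x (frontier Ω)) (infDist y (frontier Ω)))
    (by gcongr <;> simp)
  rw [← div_eq_inv_mul, le_div_iff₀' hθ0]
  exact InteriorConeOn.mul_dist_le_dist_infDist_frontier ho hp hκ0 (by linarith)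
    (by rwa [mul_div_cancel₀ R four_ne_zero]) (subset_closure hx.1) (subset_closure hy.1) hx.2 hy.2
    h.le

end InteriorCones

section LevelSets

theorem hausdorffMeasure_le_image_of_antilipschitzWith {X Y : Type*} [EMetricSpace X]
    [MeasurableSpace X] [BorelSpace X] [EMetricSpace Y] [MeasurableSpace Y] [BorelSpace Y]
    {K : ℝ≥0} {s : Set X} {f : X → Y} (hf : AntilipschitzWith K (s.domRestrict f)) {d : ℝ}
    (hd : 0 ≤ d) : μH[d] s ≤ (K : ℝ≥0∞) ^ d * μH[d] (f '' s) := by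
  have h := hf.le_hausdorffMeasure_image hd univ
  rwa [← isometry_subtype_coe.hausdorffMeasure_image (.inl hd), image_univ, Subtype.range_coe,
    image_univ, range_domRestrict] at h

theorem exists_setLIntegral_edist_rpow_neg_le {F : Type*} [NormedAddCommGroup F] [NormedSpace ℝ F]
    [FiniteDimensional ℝ F] [MeasurableSpace F] [BorelSpace F] (μ : Measure F)
    [μ.IsAddHaarMeasure] {s : ℝ} (hs : 0 < s) (hsF : s < finrank ℝ F) {A : Set F}
    (hA : Bornology.IsBounded A) :
    ∃ C : ℝ≥0, ∀ y, ∫⁻ x in A, edist x y ^ (-s) ∂μ ≤ C := by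
  have hF : 1 ≤ finrank ℝ F := Nat.one_le_iff_ne_zero.2 fun h => by simp [h] at hsF; linarith
  have : Nontrivial F := finrank_pos_iff (R := ℝ).1 hF
  have hloc : LocallyIntegrable (fun x : F => ‖x‖ ^ (-s)) μ :=
    locallyIntegrable_of_norm_le_rpow hF (C := 1) hsF (.of_forall fun x => by
      rw [one_mul, Real.norm_of_nonneg (Real.rpow_nonneg (norm_nonneg x) _)])
      (measurable_norm.pow_const _).aestronglyMeasurable
  set B := closedBall (0 : F) 1 with hB
  have hfin : ∫⁻ x in B, ‖x‖ₑ ^ (-s) ∂μ ≠ ⊤ := by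
    have h := (hloc.integrableOn_isCompact (isCompact_closedBall (0 : F) 1)).2
    refine ne_of_lt ((lintegral_congr_ae (ae_restrict_of_ae ?_)).trans_lt h)
    filter_upwards [measure_eq_zero_iff_ae_notMem.1 (measure_singleton (μ := μ) (0 : F))] with x hx
    have hx : 0 < ‖x‖ := norm_pos_iff.2 hx
    rw [Real.enorm_of_nonneg (Real.rpow_nonneg hx.le _), ← ENNReal.ofReal_rpow_of_pos hx,
      ofReal_norm]
  set J : F → ℝ≥0∞ := B.indicator fun x => ‖x‖ₑ ^ (-s) with hJ
  have hle : ∀ x y, edist x y ^ (-s) ≤ J (x - y) + 1 := fun x y => by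
    rw [edist_eq_enorm_sub]
    by_cases hx : x - y ∈ B
    · rw [hJ, indicator_of_mem hx]
      exact le_self_add
    · rw [hJ, indicator_of_notMem hx, zero_add]
      refine ENNReal.rpow_le_one_of_one_le_of_neg ?_ (neg_neg_of_pos hs)
      rw [← ofReal_norm, ← ofReal_one]
      exact ofReal_le_ofReal (by simpa [hB] using (le_of_lt (by simpa [hB] using hx)))
  refine ⟨(∫⁻ x in B, ‖x‖ₑ ^ (-s) ∂μ + μ A).toNNReal, fun y => ?_⟩
  rw [coe_toNNReal (add_ne_top.2 ⟨hfin, hA.measure_lt_top.ne⟩)]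
  calc ∫⁻ x in A, edist x y ^ (-s) ∂μ ≤ ∫⁻ x in A, (J (x - y) + 1) ∂μ :=
        lintegral_mono fun x => hle x y
    _ = ∫⁻ x in A, J (x - y) ∂μ + μ A := by
      rw [lintegral_add_right _ measurable_const, setLIntegral_one]
    _ ≤ ∫⁻ x, J (x - y) ∂μ + μ A := by
      gcongr
      exact Measure.restrict_le_self
    _ = ∫⁻ x in B, ‖x‖ₑ ^ (-s) ∂μ + μ A := by
      rw [lintegral_sub_right_eq_self J, hJ, lintegral_indicator measurableSet_closedBall]

variable {X F : Type*} [MetricSpace X] [MeasurableSpace X] [BorelSpace X]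
  [NormedAddCommGroup F] [NormedSpace ℝ F] [FiniteDimensional ℝ F] [MeasurableSpace F]
  [BorelSpace F]

/-- In the coordinates `x ↦ (δ x, T x)` this is Tonelli's theorem on `ℝ × F`. -/
theorem exists_hausdorffMeasure_le_lintegral_fiber [PolishSpace X] {δ : X → ℝ}
    (hδ : Continuous δ) {T : X → F} {K M : ℝ≥0} (hT : LipschitzWith M T) {U : Set X}
    (hU : AntilipschitzWith K (U.domRestrict fun x => (δ x, T x))) :
    ∃ C : ℝ≥0, ∀ A ⊆ U, MeasurableSet A →
      μH[finrank ℝ F + 1] A ≤ C * ∫⁻ β, μH[finrank ℝ F] (A ∩ δ ⁻¹' {β}) := by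
  set n : ℝ := (finrank ℝ F : ℝ) with hn
  have hn0 : 0 ≤ n := Nat.cast_nonneg _
  set ψ : X → ℝ × F := fun x => (δ x, T x)
  have hψc : Continuous ψ := hδ.prodMk hT.continuous
  obtain ⟨c, hc⟩ : ∃ c : ℝ≥0, (μH[n + 1] : Measure (ℝ × F)) = c • volume.prod μH[n] := by
    have hfin : n + 1 = finrank ℝ (ℝ × F) := by simp [hn, add_comm]
    rw [hfin]
    exact ⟨_, Measure.isAddLeftInvariant_eq_smul _ _⟩
  refine ⟨K ^ (n + 1) * c * M ^ n, fun A hAU hA => ?_⟩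
  have hAψ : AntilipschitzWith K (A.domRestrict ψ) := fun x y => hU ⟨x, hAU x.2⟩ ⟨y, hAU y.2⟩
  have hψA : MeasurableSet (ψ '' A) :=
    hA.image_of_continuousOn_injOn hψc.continuousOn (injOn_iff_injective.2 hAψ.injective)
  have hslice : ∀ β, μH[n] (Prod.mk β ⁻¹' (ψ '' A)) ≤ (M : ℝ≥0∞) ^ n * μH[n] (A ∩ δ ⁻¹' {β}) := by
    intro β
    refine (measure_mono ?_).trans (hT.hausdorffMeasure_image_le hn0 _)
    rintro z ⟨x, hx, hxz⟩
    exact ⟨x, ⟨hx, congrArg Prod.fst hxz⟩, congrArg Prod.snd hxz⟩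
  calc μH[n + 1] A ≤ (K : ℝ≥0∞) ^ (n + 1) * μH[n + 1] (ψ '' A) :=
        hausdorffMeasure_le_image_of_antilipschitzWith hAψ (by positivity)
    _ = (K : ℝ≥0∞) ^ (n + 1) * c * ∫⁻ β, μH[n] (Prod.mk β ⁻¹' (ψ '' A)) := by
      rw [hc, Measure.smul_apply, Measure.prod_apply hψA, ENNReal.smul_def, smul_eq_mul, mul_assoc]
    _ ≤ (K : ℝ≥0∞) ^ (n + 1) * c * ∫⁻ β, (M : ℝ≥0∞) ^ n * μH[n] (A ∩ δ ⁻¹' {β}) := by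
      gcongr with β
      exact hslice β
    _ = _ := by
      rw [lintegral_const_mul' _ _ (rpow_ne_top_of_nonneg hn0 coe_ne_top), ← mul_assoc,
        ENNReal.coe_mul, ENNReal.coe_mul, coe_rpow_of_nonneg _ hn0,
        coe_rpow_of_nonneg _ (by positivity)]

theorem map_restrict_hausdorffMeasure_le {Y : Type*} [MetricSpace Y] [MeasurableSpace Y]
    [BorelSpace Y] {K : ℝ≥0} {S : Set X} {T : X → Y} (hT : Measurable T)
    (hS : AntilipschitzWith K (S.domRestrict T)) {d : ℝ} (hd : 0 ≤ d) {B : Set Y}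
    (hB : MapsTo T S B) :
    (μH[d].restrict S).map T ≤ (K : ℝ≥0∞) ^ d • μH[d].restrict B := by
  refine Measure.le_iff.2 fun D hD => ?_
  rw [Measure.map_apply hT hD, Measure.restrict_apply (hT hD), Measure.smul_apply,
    Measure.restrict_apply hD, smul_eq_mul]
  have hanti : AntilipschitzWith K ((T ⁻¹' D ∩ S).domRestrict T) :=
    fun x y => hS ⟨x, x.2.2⟩ ⟨y, y.2.2⟩
  refine (hausdorffMeasure_le_image_of_antilipschitzWith hanti hd).trans ?_
  gcongr
  rintro _ ⟨x, hx, rfl⟩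
  exact ⟨hx.1, hB hx.2⟩

theorem exists_setLIntegral_fiber_edist_rpow_neg_le {δ : X → ℝ} {T : X → F} {K M : ℝ≥0}
    (hT : LipschitzWith M T) {U : Set X} (hUb : Bornology.IsBounded U)
    (hU : AntilipschitzWith K (U.domRestrict fun x => (δ x, T x))) {s : ℝ} (hs : 0 < s)
    (hsF : s < finrank ℝ F) :
    ∃ C : ℝ≥0, ∀ β y, ∫⁻ x in U ∩ δ ⁻¹' {β}, edist x y ^ (-s) ∂μH[finrank ℝ F] ≤ C := by
  set n : ℝ := (finrank ℝ F : ℝ)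
  have hn0 : 0 ≤ n := Nat.cast_nonneg _
  obtain ⟨C, hC⟩ := exists_setLIntegral_edist_rpow_neg_le (F := F) μH[n] hs hsF
    (hT.isBounded_image hUb)
  refine ⟨(M + 1) ^ s * (K ^ n * C), fun β y => ?_⟩
  have hTm : Measurable T := hT.continuous.measurable
  have hanti : AntilipschitzWith K ((U ∩ δ ⁻¹' {β}).domRestrict T) := fun x y => by
    have h := hU ⟨x, x.2.1⟩ ⟨y, y.2.1⟩
    simp only [domRestrict_apply, Prod.edist_eq] at h
    rwa [show δ x = β from x.2.2, show δ y = β from y.2.2, edist_self, max_eq_right zero_le] at h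
  have hle : ∀ x, edist x y ^ (-s) ≤ ((M + 1 : ℝ≥0) : ℝ≥0∞) ^ s * edist (T x) (T y) ^ (-s) := by
    intro x
    have hM : ((M + 1 : ℝ≥0) : ℝ≥0∞) ≠ 0 := by positivity
    have hTx : edist (T x) (T y) ≤ (M + 1 : ℝ≥0) * edist x y := hT.weaken le_self_add x y
    calc edist x y ^ (-s)
        = ((M + 1 : ℝ≥0) : ℝ≥0∞) ^ s * ((M + 1 : ℝ≥0) * edist x y) ^ (-s) := by
          rw [mul_rpow_of_ne_top coe_ne_top (edist_ne_top _ _), ← mul_assoc,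
            ← ENNReal.rpow_add _ _ hM coe_ne_top, add_neg_cancel, rpow_zero, one_mul]
      _ ≤ _ := by
          gcongr 1
          rw [rpow_neg, rpow_neg, ENNReal.inv_le_inv]
          exact rpow_le_rpow hTx hs.le
  calc ∫⁻ x in U ∩ δ ⁻¹' {β}, edist x y ^ (-s) ∂μH[n]
      ≤ ∫⁻ x in U ∩ δ ⁻¹' {β}, ((M + 1 : ℝ≥0) : ℝ≥0∞) ^ s * edist (T x) (T y) ^ (-s) ∂μH[n] :=
        lintegral_mono hle
    _ = ((M + 1 : ℝ≥0) : ℝ≥0∞) ^ s * ∫⁻ z, edist z (T y) ^ (-s)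
          ∂(μH[n].restrict (U ∩ δ ⁻¹' {β})).map T := by
      rw [lintegral_const_mul' _ _ (rpow_ne_top_of_nonneg hs.le coe_ne_top),
        lintegral_map (by fun_prop) hTm]
    _ ≤ ((M + 1 : ℝ≥0) : ℝ≥0∞) ^ s * ∫⁻ z, edist z (T y) ^ (-s)
          ∂((K : ℝ≥0∞) ^ n • μH[n].restrict (T '' U)) := by
      gcongr
      exact map_restrict_hausdorffMeasure_le hTm hanti hn0 fun x hx => mem_image_of_mem T hx.1
    _ ≤ ((M + 1 : ℝ≥0) : ℝ≥0∞) ^ s * ((K : ℝ≥0∞) ^ n * C) := by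
      rw [lintegral_smul_measure, smul_eq_mul]
      gcongr
      exact hC _
    _ = _ := by
      rw [ENNReal.coe_mul, ENNReal.coe_mul, coe_rpow_of_nonneg _ hs.le, coe_rpow_of_nonneg _ hn0]

/-- The level sets of `δ` in `U` are regular of dimension `d`: the measure `μ` is controlled on `U`
by slicing along them, and the Riesz potentials of order `s` of their surface measures are bounded.
The same constant `C` serves for both. -/
structure RegularLevelSets (μ : Measure X) (d s : ℝ) (δ : X → ℝ) (U : Set X) (C : ℝ≥0) :
    Prop where
  measure_le : ∀ A ⊆ U, MeasurableSet A → μ A ≤ C * ∫⁻ β, μH[d] (A ∩ δ ⁻¹' {β})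
  lintegral_edist_rpow_neg_le : ∀ β y, ∫⁻ x in U ∩ δ ⁻¹' {β}, edist x y ^ (-s) ∂μH[d] ≤ C

namespace RegularLevelSets

variable {μ : Measure X} {d s : ℝ} {δ : X → ℝ} {U V : Set X} {C D : ℝ≥0}

theorem empty : RegularLevelSets μ d s δ ∅ 0 where
  measure_le A hA _ := by simp [subset_empty_iff.1 hA]
  lintegral_edist_rpow_neg_le β y := by simp

theorem mono (h : RegularLevelSets μ d s δ U C) (hVU : V ⊆ U) : RegularLevelSets μ d s δ V C where
  measure_le A hA := h.measure_le A (hA.trans hVU)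
  lintegral_edist_rpow_neg_le β y :=
    (lintegral_mono_set (inter_subset_inter_left _ hVU)).trans (h.lintegral_edist_rpow_neg_le β y)

theorem union (hU : RegularLevelSets μ d s δ U C) (hV : RegularLevelSets μ d s δ V D)
    (hUm : MeasurableSet U) : RegularLevelSets μ d s δ (U ∪ V) (C + D) where
  measure_le A hA hAm := by
    have hUA := hU.measure_le (A ∩ U) inter_subset_right (hAm.inter hUm)
    have hVA := hV.measure_le (A \ U) (sdiff_subset_iff.2 hA) (hAm.diff hUm)
    rw [← measure_inter_add_sdiff A hUm, ENNReal.coe_add, add_mul]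
    gcongr
    · refine hUA.trans ?_
      gcongr
      exact inter_subset_left
    · refine hVA.trans ?_
      gcongr
      exact sdiff_subset
  lintegral_edist_rpow_neg_le β y := by
    rw [union_inter_distrib_right, ENNReal.coe_add]
    exact (lintegral_union_le _ _ _).trans
      (add_le_add (hU.lintegral_edist_rpow_neg_le β y) (hV.lintegral_edist_rpow_neg_le β y))

theorem setLIntegral_le (h : RegularLevelSets μ d s δ U C) (hU : MeasurableSet U)
    {f : X → ℝ≥0∞} (hf : Measurable f) :
    ∫⁻ x in U, f x ∂μ ≤ C * ∫⁻ β, ∫⁻ x in U ∩ δ ⁻¹' {β}, f x ∂μH[d] := by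
  refine Measurable.ennreal_induction (motive := fun f =>
      ∫⁻ x in U, f x ∂μ ≤ C * ∫⁻ β, ∫⁻ x in U ∩ δ ⁻¹' {β}, f x ∂μH[d])
    (fun c A hA => ?_) (fun f g _ hf _ hfU hgU => ?_) (fun f hf hmono hfU => ?_) hf
  · simp only [lintegral_indicator hA, lintegral_const, Measure.restrict_restrict hA,
      Measure.restrict_apply MeasurableSet.univ, univ_inter]
    calc c * μ (A ∩ U) ≤ c * (C * ∫⁻ β, μH[d] (A ∩ U ∩ δ ⁻¹' {β})) := by
          gcongr
          exact h.measure_le _ inter_subset_right (hA.inter hU)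
      _ = C * (c * ∫⁻ β, μH[d] (A ∩ U ∩ δ ⁻¹' {β})) := mul_left_comm _ _ _
      _ ≤ C * ∫⁻ β, c * μH[d] (A ∩ (U ∩ δ ⁻¹' {β})) := by
          gcongr
          simp only [inter_assoc]
          exact lintegral_const_mul_le _ _
  · simp only [Pi.add_apply, lintegral_add_left hf]
    calc _ ≤ _ := add_le_add hfU hgU
      _ ≤ _ := by
        rw [← mul_add]
        gcongr
        exact le_lintegral_add _ _
  · simp only [lintegral_iSup hf hmono]
    refine iSup_le fun n => (hfU n).trans ?_
    gcongr with β
    exact le_iSup (fun n => ∫⁻ x in U ∩ δ ⁻¹' {β}, f n x ∂μH[d]) n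

end RegularLevelSets

end LevelSets

section BoundaryLayers

variable {E : Type*} [NormedAddCommGroup E] [NormedSpace ℝ E]

/-- The surface `Σ_β` of points of `Ω` at distance `β` from the boundary. -/
def levelSurface (Ω : Set E) (β : ℝ) : Set E := {x ∈ Ω | infDist x (frontier Ω) = β}

/-- The part of `Ω` at distance less than `ρ` from the boundary. -/
def boundaryLayer (Ω : Set E) (ρ : ℝ) : Set E := {x ∈ Ω | infDist x (frontier Ω) < ρ}

variable [FiniteDimensional ℝ E] [MeasurableSpace E] [BorelSpace E]

theorem HasC1Boundary.exists_regularLevelSets_inter_ball {Ω : Set E} (ho : IsOpen Ω)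
    (hΩ : HasC1Boundary Ω) (μ : Measure E) [μ.IsAddHaarMeasure] {s : ℝ} (hs : 0 < s)
    (hsE : s < finrank ℝ E - 1) {p : E} (hp : p ∈ frontier Ω) :
    ∃ r > 0, ∃ C : ℝ≥0, RegularLevelSets μ (finrank ℝ E - 1) s (infDist · (frontier Ω))
      (Ω ∩ ball p r) C := by
  obtain ⟨F, T, hF, r, hr, K, hK⟩ := hΩ.exists_antilipschitzWith_infDist_prod ho hp
  have hFE : (finrank ℝ F : ℝ) = finrank ℝ E - 1 := by rw [← hF]; simp
  obtain ⟨C₁, hC₁⟩ := exists_hausdorffMeasure_le_lintegral_fiber (continuous_infDist_pt _)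
    T.lipschitz hK
  obtain ⟨C₂, hC₂⟩ := exists_setLIntegral_fiber_edist_rpow_neg_le T.lipschitz
    (isBounded_ball.subset inter_subset_right) hK hs (hFE ▸ hsE)
  rw [hFE] at hC₁ hC₂
  rw [sub_add_cancel] at hC₁
  set c := μ.addHaarScalarFactor μH[finrank ℝ E] with hc
  refine ⟨r, hr, c * C₁ + C₂, fun A hA hAm => ?_, fun β y => ?_⟩
  · rw [Measure.isAddLeftInvariant_eq_smul μ μH[finrank ℝ E], ← hc]
    calc c • μH[finrank ℝ E] A ≤ c * (C₁ * _) := mul_le_mul_right (hC₁ A hA hAm) _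
      _ ≤ _ := by
        rw [← mul_assoc, ← ENNReal.coe_mul]
        gcongr
        exact_mod_cast le_self_add
  · exact (hC₂ β y).trans (by exact_mod_cast le_add_self)

theorem HasC1Boundary.exists_regularLevelSets_boundaryLayer {Ω : Set E} (ho : IsOpen Ω)
    (hb : Bornology.IsBounded Ω) (hΩ : HasC1Boundary Ω) (hne : (frontier Ω).Nonempty)
    (μ : Measure E) [μ.IsAddHaarMeasure] {s : ℝ} (hs : 0 < s) (hsE : s < finrank ℝ E - 1) :
    ∃ ρ > 0, ∃ C : ℝ≥0, RegularLevelSets μ (finrank ℝ E - 1) s (infDist · (frontier Ω))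
      (boundaryLayer Ω ρ) C := by
  have hc : IsCompact (frontier Ω) := hb.isCompact_closure.of_isClosed_subset isClosed_frontier
    frontier_subset_closure
  obtain ⟨V, hV, hΩV, C, hC⟩ : ∃ V, IsOpen V ∧ frontier Ω ⊆ V ∧ ∃ C : ℝ≥0,
      RegularLevelSets μ (finrank ℝ E - 1) s (infDist · (frontier Ω)) (Ω ∩ V) C := by
    refine hc.induction_on (p := fun S => ∃ V, IsOpen V ∧ S ⊆ V ∧ ∃ C : ℝ≥0,
      RegularLevelSets μ (finrank ℝ E - 1) s (infDist · (frontier Ω)) (Ω ∩ V) C) ?_ ?_ ?_ ?_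
    · exact ⟨∅, isOpen_empty, Subset.rfl, 0, by simpa using RegularLevelSets.empty⟩
    · rintro S T hST ⟨V, hV, hTV, hreg⟩
      exact ⟨V, hV, hST.trans hTV, hreg⟩
    · rintro S T ⟨V, hV, hSV, C, hC⟩ ⟨W, hW, hTW, D, hD⟩
      refine ⟨V ∪ W, hV.union hW, union_subset_union hSV hTW, C + D, ?_⟩
      rw [inter_union_distrib_left]
      exact hC.union hD (ho.inter hV).measurableSet
    · intro p hp
      obtain ⟨r, hr, C, hC⟩ := hΩ.exists_regularLevelSets_inter_ball ho μ hs hsE hp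
      exact ⟨ball p r, mem_nhdsWithin_of_mem_nhds (ball_mem_nhds p hr), ball p r, isOpen_ball,
        Subset.rfl, C, hC⟩
  obtain ⟨ρ, hρ, hρV⟩ := hc.exists_thickening_subset_open hV hΩV
  exact ⟨ρ, hρ, C, hC.mono fun x hx =>
    ⟨hx.1, hρV ((mem_thickening_iff_infDist_lt hne).2 hx.2)⟩⟩

end BoundaryLayers

section Comparability

/-- `a` and `b` are comparable with constant `C`, that is `C⁻¹ b ≤ a ≤ C b`. -/
def ComparableWith (C : ℝ≥0) (a b : ℝ≥0∞) : Prop := a ≤ C * b ∧ b ≤ C * a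

namespace ComparableWith

variable {C D : ℝ≥0} {a b a' b' c : ℝ≥0∞}

theorem refl (a : ℝ≥0∞) : ComparableWith 1 a a := by simp [ComparableWith]

theorem of_le_mul (hab : a ≤ C * b) (hba : b ≤ D * a) : ComparableWith (max C D) a b :=
  ⟨hab.trans (by gcongr; exact le_max_left _ _), hba.trans (by gcongr; exact le_max_right _ _)⟩

theorem trans (hab : ComparableWith C a b) (hbc : ComparableWith D b c) :
    ComparableWith (C * D) a c := by
  refine ⟨hab.1.trans ?_, hbc.2.trans ?_⟩
  · rw [ENNReal.coe_mul, mul_assoc]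
    exact mul_le_mul_right hbc.1 _
  · rw [ENNReal.coe_mul, mul_comm (C : ℝ≥0∞), mul_assoc]
    exact mul_le_mul_right hab.2 _

theorem symm (h : ComparableWith C a b) : ComparableWith C b a := And.symm h

theorem add (h : ComparableWith C a b) (h' : ComparableWith D a' b') :
    ComparableWith (max C D) (a + a') (b + b') := by
  rw [ComparableWith, mul_add, mul_add]
  exact ⟨add_le_add (h.1.trans (by gcongr; exact le_max_left _ _))
      (h'.1.trans (by gcongr; exact le_max_right _ _)),
    add_le_add (h.2.trans (by gcongr; exact le_max_left _ _))
      (h'.2.trans (by gcongr; exact le_max_right _ _))⟩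

theorem lintegral {X : Type*} [MeasurableSpace X] {μ : Measure X} {f g : X → ℝ≥0∞}
    (h : ∀ᵐ x ∂μ, ComparableWith C (f x) (g x)) :
    ComparableWith C (∫⁻ x, f x ∂μ) (∫⁻ x, g x ∂μ) := by
  rw [ComparableWith, ← lintegral_const_mul' _ _ coe_ne_top, ← lintegral_const_mul' _ _ coe_ne_top]
  exact ⟨lintegral_mono_ae (h.mono fun _ => And.left),
    lintegral_mono_ae (h.mono fun _ => And.right)⟩

theorem ofReal_max_one (h : ComparableWith C a b) :
    ENNReal.ofReal (max 1 (C : ℝ))⁻¹ * b ≤ a ∧ a ≤ ENNReal.ofReal (max 1 (C : ℝ)) * b := by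
  have hC : (C : ℝ≥0∞) ≤ ENNReal.ofReal (max 1 (C : ℝ)) := by
    rw [← ofReal_coe_nnreal]
    exact ofReal_le_ofReal (le_max_right _ _)
  refine ⟨?_, h.1.trans (by gcongr)⟩
  rw [ofReal_inv_of_pos (by positivity), mul_comm, ← div_eq_mul_inv]
  exact div_le_of_le_mul' (h.2.trans (by gcongr))

end ComparableWith

theorem comparableWith_ofReal_div_mul {P p d t : ℝ} {C : ℝ≥0} (hC : 0 < C) (hP : 0 ≤ P)
    (ht : 0 ≤ t) (hd : 0 < d) (hdp : (C : ℝ)⁻¹ * d ≤ p) (hpd : p ≤ C * d) :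
    ComparableWith C (ENNReal.ofReal (P / p * t)) (ENNReal.ofReal (P / d * t)) := by
  have hp : 0 < p := lt_of_lt_of_le (by positivity) hdp
  rw [inv_mul_le_iff₀ (by positivity)] at hdp
  rw [ComparableWith, ← ofReal_coe_nnreal, ← ofReal_mul C.coe_nonneg,
    ← ofReal_mul C.coe_nonneg]
  constructor <;> apply ofReal_le_ofReal
  · calc P / p * t ≤ P / (d / C) * t := by gcongr; rwa [div_le_iff₀' (by positivity)]
      _ = C * (P / d * t) := by field_simp
  · calc P / d * t ≤ P / (p / C) * t := by gcongr; rwa [div_le_iff₀' (by positivity)]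
      _ = C * (P / p * t) := by field_simp

end Comparability

section Representation

theorem sFinite_of_lintegral_ne_top {X : Type*} [MeasurableSpace X] {μ : Measure X}
    {f : X → ℝ≥0∞} (hf : AEMeasurable f μ) (hpos : ∀ᵐ x ∂μ, f x ≠ 0) (htop : ∀ᵐ x ∂μ, f x ≠ ⊤)
    (hfin : ∫⁻ x, f x ∂μ ≠ ⊤) : SFinite μ := by
  have : IsFiniteMeasure (μ.withDensity f) := isFiniteMeasure_withDensity hfin
  rw [← withDensity_inv_same₀ hf hpos htop]
  infer_instance

theorem lintegral_ofReal_mul_add_lintegral_lintegral_ofReal_mul_eq {X Y Z : Type*}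
    [MeasurableSpace X] [MeasurableSpace Y] [MeasurableSpace Z] {μ : Measure X} {τ : Measure Y}
    {ν : Measure Z} [SFinite μ] [SFinite τ] [SFinite ν] {w u : X → ℝ} {g : X → Y → ℝ}
    {k : X → Z → ℝ} (hw : ∀ᵐ x ∂μ, 0 ≤ w x) (hwu : AEMeasurable (fun x => w x * u x) μ)
    (hwg : AEMeasurable (Function.uncurry fun x y => w x * g x y) (μ.prod τ))
    (hwk : AEMeasurable (Function.uncurry fun x z => w x * k x z) (μ.prod ν))
    (hrep : ∀ᵐ x ∂μ, ENNReal.ofReal (u x) + ∫⁻ y, ENNReal.ofReal (g x y) ∂τ =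
      ∫⁻ z, ENNReal.ofReal (k x z) ∂ν) :
    ∫⁻ x, ENNReal.ofReal (w x * u x) ∂μ + ∫⁻ y, ∫⁻ x, ENNReal.ofReal (w x * g x y) ∂μ ∂τ =
      ∫⁻ z, ∫⁻ x, ENNReal.ofReal (w x * k x z) ∂μ ∂ν := by
  rw [← lintegral_lintegral_swap (f := fun x y => ENNReal.ofReal (w x * g x y))
      hwg.ennreal_ofReal,
    ← lintegral_lintegral_swap (f := fun x z => ENNReal.ofReal (w x * k x z))
      hwk.ennreal_ofReal,
    ← lintegral_add_left' hwu.ennreal_ofReal]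
  refine lintegral_congr_ae ?_
  filter_upwards [hw, hrep] with x hwx hx
  simp only [ofReal_mul hwx, lintegral_const_mul' _ _ ofReal_ne_top, ← mul_add, hx]

theorem comparableWith_lintegral_add_lintegral_measure_univ {X Y Z : Type*} [MeasurableSpace X]
    [MeasurableSpace Y] [MeasurableSpace Z] {μ : Measure X} {τ : Measure Y} {ν : Measure Z}
    [SFinite μ] [SFinite τ] [SFinite ν] {w u : X → ℝ} {g : X → Y → ℝ} {k : X → Z → ℝ}
    {φ : Y → ℝ≥0∞} {A B : ℝ≥0} (hw : ∀ᵐ x ∂μ, 0 ≤ w x)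
    (hwu : AEMeasurable (fun x => w x * u x) μ)
    (hwg : AEMeasurable (Function.uncurry fun x y => w x * g x y) (μ.prod τ))
    (hwk : AEMeasurable (Function.uncurry fun x z => w x * k x z) (μ.prod ν))
    (hg : ∀ᵐ y ∂τ, ComparableWith A (∫⁻ x, ENNReal.ofReal (w x * g x y) ∂μ) (φ y))
    (hk : ∀ᵐ z ∂ν, ComparableWith B (∫⁻ x, ENNReal.ofReal (w x * k x z) ∂μ) 1)
    (hrep : ∀ᵐ x ∂μ, ENNReal.ofReal (u x) + ∫⁻ y, ENNReal.ofReal (g x y) ∂τ =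
      ∫⁻ z, ENNReal.ofReal (k x z) ∂ν) :
    ComparableWith (max 1 A * B) (∫⁻ x, ENNReal.ofReal (w x * u x) ∂μ + ∫⁻ y, φ y ∂τ)
      (ν univ) := by
  have hτ := (ComparableWith.refl (∫⁻ x, ENNReal.ofReal (w x * u x) ∂μ)).add (.lintegral hg)
  have hν := ComparableWith.lintegral hk
  rw [lintegral_ofReal_mul_add_lintegral_lintegral_ofReal_mul_eq hw hwu hwg hwk hrep] at hτ
  rw [lintegral_one] at hν
  exact hτ.symm.trans hν

end Representation

section LocalLowerBounds

theorem exists_eventually_ofReal_le_mul_setLIntegral {X : Type*} [TopologicalSpace X]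
    [MeasurableSpace X] [BorelSpace X] {μ : Measure X} [NullSingletonClass μ] [μ.IsOpenPosMeasure]
    [IsLocallyFiniteMeasure μ] {Ω : Set X} {l : Filter X} {φ : X → ℝ} {f : X → X → ℝ} {x₀ : X}
    {c : ℝ} (hc : 0 ≤ c)
    (h : ∀ᶠ q in 𝓝 x₀ ×ˢ l, q.1 ∈ Ω ∧ (q.1 ≠ q.2 → φ q.2 ≤ c * f q.1 q.2)) :
    ∃ C : ℝ≥0, ∀ᶠ y in l,
      ENNReal.ofReal (φ y) ≤ C * ∫⁻ x in Ω, ENNReal.ofReal (f x y) ∂μ := by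
  obtain ⟨U, hU, V, hV, hUV⟩ := mem_prod_iff.1 h
  obtain ⟨U', hU', hfin⟩ := μ.finiteAt_nhds x₀
  obtain ⟨W, hWU, hW, hx₀⟩ := _root_.mem_nhds_iff.1 (inter_mem hU hU')
  have hWpos : μ W ≠ 0 := (hW.measure_pos μ ⟨x₀, hx₀⟩).ne'
  have hWfin : μ W ≠ ⊤ := ((measure_mono (hWU.trans inter_subset_right)).trans_lt hfin).ne
  refine ⟨c.toNNReal * (μ W).toNNReal⁻¹, mem_of_superset hV fun y hy => ?_⟩
  have hmem : ∀ x ∈ W, x ∈ Ω ∧ (x ≠ y → φ y ≤ c * f x y) :=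
    fun x hx => hUV (mk_mem_prod (hWU hx).1 hy)
  have hint : ENNReal.ofReal (φ y) * μ W ≤
      c.toNNReal * ∫⁻ x in Ω, ENNReal.ofReal (f x y) ∂μ := by
    calc ENNReal.ofReal (φ y) * μ W = ∫⁻ _ in W, ENNReal.ofReal (φ y) ∂μ :=
          (setLIntegral_const _ _).symm
      _ ≤ ∫⁻ x in W, c.toNNReal * ENNReal.ofReal (f x y) ∂μ := by
        refine setLIntegral_mono_ae' hW.measurableSet ?_
        filter_upwards [measure_eq_zero_iff_ae_notMem.1 (measure_singleton (μ := μ) y)]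
          with x hxy hx
        exact (ofReal_le_ofReal ((hmem x hx).2 hxy)).trans_eq (ofReal_mul hc)
      _ ≤ c.toNNReal * ∫⁻ x in Ω, ENNReal.ofReal (f x y) ∂μ := by
        rw [lintegral_const_mul' _ _ coe_ne_top]
        gcongr
        exact fun x hx => (hmem x hx).1
  rw [mem_ofPred_eq, ENNReal.coe_mul, coe_inv (toNNReal_ne_zero.2 ⟨hWpos, hWfin⟩),
    coe_toNNReal hWfin, mul_right_comm, ← div_eq_mul_inv]
  exact (ENNReal.le_div_iff_mul_le (.inl hWpos) (.inl hWfin)).2 hint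

theorem exists_ofReal_le_mul_setLIntegral {X : Type*} [TopologicalSpace X] [MeasurableSpace X]
    [BorelSpace X] {μ : Measure X} [NullSingletonClass μ] [μ.IsOpenPosMeasure]
    [IsLocallyFiniteMeasure μ] {Ω s t : Set X} (ht : IsCompact t) (hst : s ⊆ t) {φ : X → ℝ}
    {f : X → X → ℝ}
    (h : ∀ p ∈ t, ∃ x₀, ∃ c ≥ (0 : ℝ), ∀ᶠ q in 𝓝 x₀ ×ˢ 𝓝[s] p,
      q.1 ∈ Ω ∧ (q.1 ≠ q.2 → φ q.2 ≤ c * f q.1 q.2)) :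
    ∃ C : ℝ≥0, ∀ y ∈ s, ENNReal.ofReal (φ y) ≤ C * ∫⁻ x in Ω, ENNReal.ofReal (f x y) ∂μ := by
  suffices ∃ C : ℝ≥0, ∀ y ∈ t, y ∈ s →
      ENNReal.ofReal (φ y) ≤ C * ∫⁻ x in Ω, ENNReal.ofReal (f x y) ∂μ from
    this.imp fun C hC y hy => hC y (hst hy) hy
  refine ht.induction_on ⟨0, by simp⟩ (fun t t' htt' ⟨C, hC⟩ => ⟨C, fun y hy => hC y (htt' hy)⟩)
    ?_ fun p hp => ?_
  · rintro t t' ⟨C, hC⟩ ⟨D, hD⟩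
    refine ⟨max C D, fun y hy hys => ?_⟩
    rcases hy with hyt | hyt
    · exact (hC y hyt hys).trans (by gcongr; exact le_max_left _ _)
    · exact (hD y hyt hys).trans (by gcongr; exact le_max_right _ _)
  · obtain ⟨x₀, c, hc, hev⟩ := h p hp
    obtain ⟨C, hC⟩ := exists_eventually_ofReal_le_mul_setLIntegral (μ := μ) hc hev
    exact ⟨_, mem_nhdsWithin_of_mem_nhds (eventually_nhdsWithin_iff.1 hC), C, fun y hy => hy⟩

theorem exists_one_le_mul_setLIntegral {X : Type*} [TopologicalSpace X] [MeasurableSpace X]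
    [BorelSpace X] {μ : Measure X} [NullSingletonClass μ] [μ.IsOpenPosMeasure]
    [IsLocallyFiniteMeasure μ] {Ω t : Set X} (ho : IsOpen Ω) (hΩ : Ω.Nonempty) (ht : IsCompact t)
    {k : X → X → ℝ} (hk : ContinuousOn (Function.uncurry k) (Ω ×ˢ t))
    (hpos : ∀ x ∈ Ω, ∀ y ∈ t, 0 < k x y) :
    ∃ C : ℝ≥0, ∀ y ∈ t, 1 ≤ C * ∫⁻ x in Ω, ENNReal.ofReal (k x y) ∂μ := by
  obtain ⟨x₀, hx₀⟩ := hΩ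
  simp only [← ofReal_one]
  refine exists_ofReal_le_mul_setLIntegral (φ := fun _ => 1) ht Subset.rfl fun p hp => ?_
  have hkp : 0 < k x₀ p := hpos x₀ hx₀ p hp
  have hev := (hk (x₀, p) ⟨hx₀, hp⟩).eventually_const_lt (half_lt_self hkp)
  rw [nhdsWithin_prod_eq, ho.nhdsWithin_eq hx₀] at hev
  refine ⟨x₀, 2 / k x₀ p, by positivity, ?_⟩
  filter_upwards [hev, tendsto_fst (ho.mem_nhds hx₀)] with q hq hqΩ
  refine ⟨hqΩ, fun _ => ?_⟩
  rw [div_mul_eq_mul_div, one_le_div hkp]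
  exact ((div_lt_iff₀' two_pos).1 hq).le

end LocalLowerBounds

section BoundaryKernels

theorem measurable_indicator_of_continuousOn {X Y : Type*} [TopologicalSpace X]
    [MeasurableSpace X] [OpensMeasurableSpace X] [TopologicalSpace Y] [MeasurableSpace Y]
    [BorelSpace Y] [Zero Y] {f : X → Y} {s : Set X} (hf : ContinuousOn f s)
    (hs : MeasurableSet s) : Measurable (s.indicator f) := by
  classical
  rw [← piecewise_eq_indicator]
  exact hf.measurable_piecewise continuousOn_const hs

theorem isCompact_le_infDist_frontier {X : Type*} [MetricSpace X] [ProperSpace X] {Ω : Set X}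
    (ho : IsOpen Ω) (hb : Bornology.IsBounded Ω) {r : ℝ} (hr : 0 < r) :
    IsCompact {x ∈ Ω | r ≤ infDist x (frontier Ω)} := by
  suffices {x ∈ Ω | r ≤ infDist x (frontier Ω)} =
      closure Ω ∩ {x | r ≤ infDist x (frontier Ω)} by
    rw [this]
    exact hb.isCompact_closure.inter_right
      (isClosed_le continuous_const (continuous_infDist_pt _))
  ext x
  refine ⟨fun hx => ⟨subset_closure hx.1, hx.2⟩, fun ⟨hx, hrx⟩ => ⟨?_, hrx⟩⟩
  by_contra hxΩ
  have hxf : x ∈ frontier Ω := ho.frontier_eq ▸ ⟨hx, hxΩ⟩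
  rw [mem_ofPred_eq, infDist_zero_of_mem hxf] at hrx
  exact hrx.not_gt hr

variable {E : Type*} [NormedAddCommGroup E] [MeasurableSpace E] [BorelSpace E] {Ω : Set E}
  {μ : Measure E}

theorem measurableSet_boundaryLayer (ho : IsOpen Ω) (ρ : ℝ) : MeasurableSet (boundaryLayer Ω ρ) :=
  ho.measurableSet.inter (measurableSet_lt (continuous_infDist_pt _).measurable measurable_const)

theorem measurableSet_levelSurface (ho : IsOpen Ω) (β : ℝ) : MeasurableSet (levelSurface Ω β) :=
  ho.measurableSet.inter ((continuous_infDist_pt _).measurable (measurableSet_singleton β))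

theorem RegularLevelSets.setLIntegral_boundaryLayer_le {d s ρ : ℝ} {C : ℝ≥0} (ho : IsOpen Ω)
    (hne : (frontier Ω).Nonempty)
    (h : RegularLevelSets μ d s (infDist · (frontier Ω)) (boundaryLayer Ω ρ) C)
    {f : E → ℝ≥0∞} (hf : Measurable (Ω.indicator f)) {g : ℝ → ℝ≥0∞}
    (hfg : ∀ β ∈ Ioo 0 ρ, ∫⁻ x in levelSurface Ω β, f x ∂μH[d] ≤ g β) :
    ∫⁻ x in boundaryLayer Ω ρ, f x ∂μ ≤ C * ∫⁻ β in Ioo 0 ρ, g β := by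
  have hm := measurableSet_boundaryLayer ho ρ
  calc ∫⁻ x in boundaryLayer Ω ρ, f x ∂μ = ∫⁻ x in boundaryLayer Ω ρ, Ω.indicator f x ∂μ :=
        setLIntegral_congr_fun hm fun x hx => (indicator_of_mem hx.1 f).symm
    _ ≤ C * ∫⁻ β, ∫⁻ x in boundaryLayer Ω ρ ∩ (infDist · (frontier Ω)) ⁻¹' {β},
          Ω.indicator f x ∂μH[d] := h.setLIntegral_le hm hf
    _ ≤ C * ∫⁻ β, (Ioo 0 ρ).indicator g β := by
        gcongr with β
        by_cases hβ : β ∈ Ioo 0 ρ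
        · rw [indicator_of_mem hβ]
          refine le_trans ?_ (hfg β hβ)
          exact (lintegral_mono (indicator_le_self Ω f)).trans
            (lintegral_mono_set fun x hx => ⟨hx.1.1, hx.2⟩)
        · suffices boundaryLayer Ω ρ ∩ (infDist · (frontier Ω)) ⁻¹' {β} = ∅ by simp [this]
          refine eq_empty_of_forall_notMem ?_
          rintro x ⟨hx, rfl⟩
          exact hβ ⟨infDist_frontier_pos ho hne hx.1, hx.2⟩
    _ = C * ∫⁻ β in Ioo 0 ρ, g β := by rw [lintegral_indicator measurableSet_Ioo]

variable [NormedSpace ℝ E] [FiniteDimensional ℝ E] [μ.IsAddHaarMeasure]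

theorem HasC1Boundary.exists_setLIntegral_le_of_levelSurface_le (ho : IsOpen Ω)
    (hb : Bornology.IsBounded Ω) (hΩ : HasC1Boundary Ω) (hne : (frontier Ω).Nonempty)
    (hE : 2 ≤ finrank ℝ E) {k : E → E → ℝ}
    (hk : ContinuousOn (Function.uncurry k) (Ω ×ˢ frontier Ω)) {C₀ : ℝ≥0} {ε : ℝ} (hε : 0 < ε)
    (hle : ∀ y ∈ frontier Ω, ∀ β ∈ Ioo 0 ε,
      ∫⁻ x in levelSurface Ω β, ENNReal.ofReal (k x y) ∂μH[finrank ℝ E - 1] ≤ C₀) :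
    ∃ C : ℝ≥0, ∀ y ∈ frontier Ω, ∫⁻ x in Ω, ENNReal.ofReal (k x y) ∂μ ≤ C := by
  have hE' : (2 : ℝ) ≤ finrank ℝ E := mod_cast hE
  obtain ⟨ρ, hρ, C, hC⟩ := hΩ.exists_regularLevelSets_boundaryLayer ho hb hne μ
    (s := (finrank ℝ E - 1) / 2) (by linarith) (by linarith)
  set r := min ρ ε
  have hr : 0 < r := lt_min hρ hε
  set S := {x ∈ Ω | r ≤ infDist x (frontier Ω)}
  have hS : IsCompact S := isCompact_le_infDist_frontier ho hb hr
  have hcf : IsCompact (frontier Ω) := hb.isCompact_closure.of_isClosed_subset isClosed_frontier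
    frontier_subset_closure
  obtain ⟨M, hM⟩ := (hS.prod hcf).bddAbove_image (hk.mono (prod_mono_left fun x hx => hx.1))
  refine ⟨C * (C₀ * r.toNNReal) + M.toNNReal * (μ S).toNNReal, fun y hy => ?_⟩
  have hmeas : Measurable (Ω.indicator fun x => ENNReal.ofReal (k x y)) :=
    measurable_indicator_of_continuousOn (continuous_ofReal.comp_continuousOn
      (hk.uncurry_right y hy)) ho.measurableSet
  have hlayer : ∫⁻ x in boundaryLayer Ω r, ENNReal.ofReal (k x y) ∂μ ≤ C * (C₀ * r.toNNReal) := by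
    have hCr := hC.mono (V := boundaryLayer Ω r) fun x hx => ⟨hx.1, hx.2.trans_le (min_le_left _ _)⟩
    refine (hCr.setLIntegral_boundaryLayer_le ho hne hmeas fun β hβ =>
      hle y hy β ⟨hβ.1, hβ.2.trans_le (min_le_right _ _)⟩).trans_eq ?_
    rw [setLIntegral_const, Real.volume_Ioo, sub_zero, ENNReal.ofReal]
  have hcore : ∫⁻ x in S, ENNReal.ofReal (k x y) ∂μ ≤ M.toNNReal * (μ S).toNNReal := by
    rw [coe_toNNReal hS.measure_lt_top.ne]
    refine (setLIntegral_mono' hS.measurableSet fun x hx => ?_).trans_eq (setLIntegral_const _ _)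
    exact ofReal_le_ofReal (hM ⟨(x, y), ⟨hx, hy⟩, rfl⟩)
  have hcover : Ω ⊆ boundaryLayer Ω r ∪ S := fun x hx =>
    (lt_or_ge (infDist x (frontier Ω)) r).imp (fun h => ⟨hx, h⟩) fun h => ⟨hx, h⟩
  calc ∫⁻ x in Ω, ENNReal.ofReal (k x y) ∂μ
      ≤ ∫⁻ x in boundaryLayer Ω r ∪ S, ENNReal.ofReal (k x y) ∂μ := lintegral_mono_set hcover
    _ ≤ _ := lintegral_union_le _ _ _
    _ ≤ _ := add_le_add hlayer hcore
    _ = _ := by push_cast; rfl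

theorem HasC1Boundary.exists_setLIntegral_rpow_infDist_mul_edist_rpow_neg_le (ho : IsOpen Ω)
    (hb : Bornology.IsBounded Ω) (hΩ : HasC1Boundary Ω) (hne : (frontier Ω).Nonempty)
    {q s : ℝ} (hq : -1 < q) (hs : 0 < s) (hsE : s < finrank ℝ E - 1) :
    ∃ ρ > 0, ∃ C : ℝ≥0, ∀ y, ∫⁻ x in boundaryLayer Ω ρ,
      ENNReal.ofReal (infDist x (frontier Ω) ^ q) * edist x y ^ (-s) ∂μ ≤ C := by
  obtain ⟨ρ, hρ, C, hC⟩ := hΩ.exists_regularLevelSets_boundaryLayer ho hb hne μ hs hsE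
  have hfin : ∫⁻ β in Ioo 0 ρ, ENNReal.ofReal (β ^ q) ≠ ⊤ :=
    ((intervalIntegral.integrableOn_Ioo_rpow_iff hρ).2 hq).lintegral_lt_top.ne
  refine ⟨ρ, hρ, C * ((∫⁻ β in Ioo 0 ρ, ENNReal.ofReal (β ^ q)).toNNReal * C), fun y => ?_⟩
  have hf : Measurable fun x => ENNReal.ofReal (infDist x (frontier Ω) ^ q) * edist x y ^ (-s) := by
    fun_prop
  have hsurface : ∀ β ∈ Ioo 0 ρ, ∫⁻ x in levelSurface Ω β,
      ENNReal.ofReal (infDist x (frontier Ω) ^ q) * edist x y ^ (-s) ∂μH[finrank ℝ E - 1] ≤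
        ENNReal.ofReal (β ^ q) * C := fun β hβ => by
    rw [setLIntegral_congr_fun (g := fun x => ENNReal.ofReal (β ^ q) * edist x y ^ (-s))
      (measurableSet_levelSurface ho β) fun x hx => by rw [hx.2],
      lintegral_const_mul' _ _ ofReal_ne_top]
    gcongr
    refine le_trans (lintegral_mono_set ?_) (hC.lintegral_edist_rpow_neg_le β y)
    exact fun x hx => ⟨⟨hx.1, hx.2.trans_lt hβ.2⟩, hx.2⟩
  refine (hC.setLIntegral_boundaryLayer_le ho hne (hf.indicator ho.measurableSet)
    hsurface).trans_eq ?_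
  rw [lintegral_mul_const' _ _ coe_ne_top, ENNReal.coe_mul, ENNReal.coe_mul, coe_toNNReal hfin]

end BoundaryKernels

/-- The two-sided Green function estimates (H1)–(H4) for a symmetric positive kernel `G` in
dimension `d`, with `Φ` in the role of the ground state. The exponent `α*` of the informal
statement is written `αs`, and the kernel is only constrained off the diagonal. -/
structure GreenEstimates {X : Type*} [MetricSpace X] (d : ℝ) (Ω : Set X) (Φ : X → ℝ)
    (G : X → X → ℝ) (α αs a c₀ β₁ : ℝ) : Prop where
  pos : ∀ x ∈ Ω, ∀ y ∈ Ω, x ≠ y → 0 < G x y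
  near_diagonal : ∀ x ∈ Ω, infDist x (frontier Ω) ∈ Ioo 0 β₁ → ∀ y ∈ Ω, 0 < dist x y →
    dist x y < a * infDist x (frontier Ω) →
      c₀⁻¹ * dist x y ^ (2 - d) * Φ y ≤ Φ x * G x y ∧
        Φ x * G x y ≤ c₀ * dist x y ^ (2 - d) * Φ y
  off_diagonal : ∀ x ∈ Ω, infDist x (frontier Ω) ∈ Ioo 0 β₁ → ∀ y ∈ Ω,
    a * infDist x (frontier Ω) ≤ dist x y →
      Φ x * G x y ≤
        c₀ * infDist x (frontier Ω) ^ (2 * αs) * dist x y ^ (2 - d - 2 * α) * Φ y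
  interior : ∀ b : ℝ, 0 < b → ∃ C : ℝ, 1 ≤ C ∧ ∀ x ∈ Ω, ∀ y ∈ Ω, 0 < dist x y →
    dist x y ≤ b⁻¹ * min (infDist x (frontier Ω)) (infDist y (frontier Ω)) →
      C⁻¹ * dist x y ^ (2 - d) ≤ G x y ∧ G x y ≤ C * dist x y ^ (2 - d)
  symm : ∀ x ∈ Ω, ∀ y ∈ Ω, G x y = G y x
  boundary_decay : ∀ r : ℝ, 0 < r → ∃ C : ℝ, 0 < C ∧ ∀ x ∈ Ω, ∀ y ∈ Ω,
    r ≤ infDist y (frontier Ω) → infDist x (frontier Ω) < r / 2 → G x y ≤ C * Φ x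

theorem rpow_add_mul_rpow_le {s t p q r : ℝ} (hs : 0 < s) (hst : s ≤ t) (hp : 0 ≤ p) :
    s ^ (q + p) * t ^ r ≤ s ^ q * t ^ (r + p) := by
  have ht : 0 < t := hs.trans_le hst
  rw [Real.rpow_add hs, Real.rpow_add ht, mul_assoc, mul_comm (t ^ r)]
  gcongr

theorem ofReal_dist_rpow {X : Type*} [MetricSpace X] {x y : X} (hxy : x ≠ y) (s : ℝ) :
    ENNReal.ofReal (dist x y ^ s) = edist x y ^ s := by
  rw [← ofReal_rpow_of_pos (dist_pos.2 hxy), edist_dist]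

namespace GreenEstimates

section Pointwise

variable {X : Type*} [MetricSpace X] {d : ℝ} {Ω : Set X} {Φ : X → ℝ} {G : X → X → ℝ}
  {α αs a c₀ β₁ : ℝ} {x y : X}

theorem le_mul_weight_mul (h : GreenEstimates d Ω Φ G α αs a c₀ β₁) (hd : 2 ≤ d) (ha : 1 ≤ a)
    (hc₀ : 0 < c₀) (hx : x ∈ Ω) (hδ : infDist x (frontier Ω) ∈ Ioo 0 β₁)
    (haδ : a * infDist x (frontier Ω) ≤ 1) (hy : y ∈ Ω) (hΦ : 0 ≤ Φ y) (hxy : x ≠ y)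
    (hdist : dist x y < a * infDist x (frontier Ω)) :
    Φ y ≤ c₀ * (Φ x / infDist x (frontier Ω) * G x y) := by
  have hpow : 1 ≤ dist x y ^ (2 - d) :=
    Real.one_le_rpow_of_pos_of_le_one_of_nonpos (dist_pos.2 hxy) (hdist.le.trans haδ)
      (sub_nonpos.2 hd)
  have hδ1 : infDist x (frontier Ω) ≤ 1 := (le_mul_of_one_le_left hδ.1.le ha).trans haδ
  have hlow := (h.near_diagonal x hx hδ y hy (dist_pos.2 hxy) hdist).1
  have hΦG : Φ y ≤ c₀ * (Φ x * G x y) := by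
    rw [← inv_mul_le_iff₀ hc₀]
    refine le_trans ?_ hlow
    gcongr
    exact le_mul_of_one_le_right (by positivity) hpow
  refine hΦG.trans ?_
  rw [div_mul_eq_mul_div]
  gcongr
  exact le_div_self ((mul_nonneg_iff_of_pos_left hc₀).1 (hΦ.trans hΦG)) hδ.1 hδ1

theorem weight_mul_le_of_mem_boundaryLayer (h : GreenEstimates d Ω Φ G α αs a c₀ β₁)
    (hα : 1 / 2 < α) (hαs : α - 1 / 2 < αs) (ha : 1 ≤ a) (hc₀ : 0 ≤ c₀) (hx : x ∈ Ω)
    (hδ : infDist x (frontier Ω) ∈ Ioo 0 β₁) (hy : y ∈ Ω) (hΦ : 0 ≤ Φ y) (hxy : x ≠ y) :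
    Φ x / infDist x (frontier Ω) * G x y ≤ c₀ * (a * dist x y ^ (1 - d) +
      infDist x (frontier Ω) ^ (αs - α - 1 / 2) * dist x y ^ (αs - α + 3 / 2 - d)) * Φ y := by
  set t := infDist x (frontier Ω)
  have ht0 : 0 < t := hδ.1
  have hdist : 0 < dist x y := dist_pos.2 hxy
  rw [div_mul_eq_mul_div, div_le_iff₀ ht0]
  rcases lt_or_ge (dist x y) (a * t) with hnear | hfar
  · calc Φ x * G x y ≤ c₀ * dist x y ^ (1 + (1 - d)) * Φ y := by
          convert (h.near_diagonal x hx hδ y hy hdist hnear).2 using 4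
          ring
      _ = c₀ * (dist x y * dist x y ^ (1 - d)) * Φ y := by
          rw [Real.rpow_add hdist, Real.rpow_one]
      _ ≤ c₀ * (a * t * dist x y ^ (1 - d) +
            t * (t ^ (αs - α - 1 / 2) * dist x y ^ (αs - α + 3 / 2 - d))) * Φ y := by
          gcongr
          exact (mul_le_mul_of_nonneg_right hnear.le (by positivity)).trans
            (le_add_of_nonneg_right (by positivity))
      _ = _ := by ring
  · have hmove : t ^ (2 * αs) * dist x y ^ (2 - d - 2 * α) ≤
        t ^ (αs - α - 1 / 2 + 1) * dist x y ^ (αs - α + 3 / 2 - d) := by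
      convert rpow_add_mul_rpow_le (p := αs + α - 1 / 2) (q := αs - α - 1 / 2 + 1)
        (r := 2 - d - 2 * α) ht0 ((le_mul_of_one_le_left ht0.le ha).trans hfar)
        (by linarith) using 3 <;> ring
    calc Φ x * G x y ≤ c₀ * (t ^ (2 * αs) * dist x y ^ (2 - d - 2 * α)) * Φ y := by
          rw [← mul_assoc c₀]
          exact h.off_diagonal x hx hδ y hy hfar
      _ ≤ c₀ * (t ^ (αs - α - 1 / 2 + 1) * dist x y ^ (αs - α + 3 / 2 - d)) * Φ y :=
          mul_le_mul_of_nonneg_right (mul_le_mul_of_nonneg_left hmove hc₀) hΦ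
      _ = c₀ * (t * (t ^ (αs - α - 1 / 2) * dist x y ^ (αs - α + 3 / 2 - d))) * Φ y := by
          rw [Real.rpow_add ht0, Real.rpow_one]
          ring
      _ ≤ c₀ * (a * t * dist x y ^ (1 - d) +
            t * (t ^ (αs - α - 1 / 2) * dist x y ^ (αs - α + 3 / 2 - d))) * Φ y := by
          gcongr
          exact le_add_of_nonneg_left (by positivity)
      _ = _ := by ring

theorem ofReal_weight_mul_le_of_mem_boundaryLayer (h : GreenEstimates d Ω Φ G α αs a c₀ β₁)
    (hα : 1 / 2 < α) (hαs : α - 1 / 2 < αs) (ha : 1 ≤ a) (hc₀ : 0 ≤ c₀) (hx : x ∈ Ω)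
    (hδ : infDist x (frontier Ω) ∈ Ioo 0 β₁) (hy : y ∈ Ω) (hΦ : 0 ≤ Φ y) (hxy : x ≠ y) :
    ENNReal.ofReal (Φ x / infDist x (frontier Ω) * G x y) ≤
      c₀.toNNReal * (a.toNNReal * edist x y ^ (1 - d) +
        ENNReal.ofReal (infDist x (frontier Ω) ^ (αs - α - 1 / 2)) *
          edist x y ^ (αs - α + 3 / 2 - d)) * ENNReal.ofReal (Φ y) := by
  have ha0 : 0 ≤ a := zero_le_one.trans ha
  have hδ0 : 0 ≤ infDist x (frontier Ω) ^ (αs - α - 1 / 2) := Real.rpow_nonneg infDist_nonneg _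
  refine (ofReal_le_ofReal
    (h.weight_mul_le_of_mem_boundaryLayer hα hαs ha hc₀ hx hδ hy hΦ hxy)).trans_eq ?_
  rw [ofReal_mul (by positivity), ofReal_mul hc₀, ofReal_add (by positivity) (by positivity),
    ofReal_mul ha0, ofReal_mul hδ0, ofReal_dist_rpow hxy, ofReal_dist_rpow hxy]
  rfl

theorem exists_eventually_le_mul_weight_mul_of_mem (h : GreenEstimates d Ω Φ G α αs a c₀ β₁)
    (hd : 2 ≤ d) (ho : IsOpen Ω) (hne : (frontier Ω).Nonempty) (hΦc : ContinuousOn Φ Ω)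
    (hΦ : ∀ y ∈ Ω, 0 < Φ y) (hx : x ∈ Ω) :
    ∃ c ≥ (0 : ℝ), ∀ᶠ q in 𝓝 x ×ˢ 𝓝[Ω] x, q.1 ∈ Ω ∧
      (q.1 ≠ q.2 → Φ q.2 ≤ c * (Φ q.1 / infDist q.1 (frontier Ω) * G q.1 q.2)) := by
  set δ : X → ℝ := (infDist · (frontier Ω))
  have hδc : Continuous δ := continuous_infDist_pt _
  have hδx : 0 < δ x := infDist_frontier_pos ho hne hx
  have hΦx : 0 < Φ x := hΦ x hx
  have hw : ContinuousAt (fun z => Φ z / δ z) x :=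
    (hΦc.continuousAt (ho.mem_nhds hx)).div hδc.continuousAt hδx.ne'
  obtain ⟨C, hC, hint⟩ := h.interior 1 one_pos
  have hdist : ∀ᶠ q : X × X in 𝓝 x ×ˢ 𝓝 x, dist q.1 q.2 < min 1 (δ x / 2) := by
    rw [← nhds_prod_eq]
    exact continuous_dist.continuousAt.eventually_lt_const (by simp [hδx])
  rw [ho.nhdsWithin_eq hx]
  have hdeep : ∀ᶠ z in 𝓝 x, z ∈ Ω ∧ δ x / 2 < δ z :=
    (ho.eventually_mem hx).and (hδc.continuousAt.eventually_const_lt (half_lt_self hδx))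
  have hw₁ : ∀ᶠ z in 𝓝 x, Φ x / δ x / 2 < Φ z / δ z :=
    hw.eventually_const_lt (half_lt_self (div_pos hΦx hδx))
  have hΦ₂ : ∀ᶠ z in 𝓝 x, Φ z < 2 * Φ x :=
    (hΦc.continuousAt (ho.mem_nhds hx)).eventually_lt_const (by linarith)
  refine ⟨4 * δ x * C, by positivity, ?_⟩
  filter_upwards [hdist, (hdeep.and hw₁).prod_mk (hdeep.and hΦ₂)]
    with q hq ⟨⟨⟨hq₁, hδ₁⟩, hw₁⟩, ⟨hq₂, hδ₂⟩, hΦ₂⟩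
  refine ⟨hq₁, fun hne' => ?_⟩
  have hq0 : 0 < dist q.1 q.2 := dist_pos.2 hne'
  have hG : 1 ≤ C * G q.1 q.2 := by
    have hpow : 1 ≤ dist q.1 q.2 ^ (2 - d) := Real.one_le_rpow_of_pos_of_le_one_of_nonpos hq0
      (hq.le.trans (min_le_left _ _)) (sub_nonpos.2 hd)
    have hlow := (hint q.1 hq₁ q.2 hq₂ hq0 (by
      rw [inv_one, one_mul]
      exact (hq.le.trans (min_le_right _ _)).trans (le_min hδ₁.le hδ₂.le))).1
    exact hpow.trans ((inv_mul_le_iff₀ (by positivity)).1 hlow)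
  have hwpos : 0 < Φ q.1 / δ q.1 := (half_pos (div_pos hΦx hδx)).trans hw₁
  calc Φ q.2 ≤ 4 * δ x * (Φ x / δ x / 2) := hΦ₂.le.trans_eq (by field_simp; norm_num)
    _ ≤ 4 * δ x * (Φ q.1 / δ q.1) * (C * G q.1 q.2) :=
        (mul_le_mul_of_nonneg_left hw₁.le (by positivity)).trans
          (le_mul_of_one_le_right (by positivity) hG)
    _ = 4 * δ x * C * (Φ q.1 / δ q.1 * G q.1 q.2) := by ring

variable [ProperSpace X]

theorem exists_le_mul_rpow_dist_of_le_infDist (h : GreenEstimates d Ω Φ G α αs a c₀ β₁)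
    (hd : 1 ≤ d) (ho : IsOpen Ω) (hb : Bornology.IsBounded Ω) (hΦc : ContinuousOn Φ Ω)
    (hΦ : ∀ y ∈ Ω, 0 < Φ y) {r : ℝ} (hr : 0 < r) :
    ∃ C : ℝ≥0, ∀ x ∈ Ω, r ≤ infDist x (frontier Ω) → ∀ y ∈ Ω, x ≠ y →
      G x y ≤ C * dist x y ^ (1 - d) * Φ y := by
  set D := diam Ω + 1 with hD
  have hD0 : 0 < D := by positivity
  obtain ⟨m, hm, hmΦ⟩ := (isCompact_le_infDist_frontier ho hb (half_pos hr)).exists_forall_le'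
    (hΦc.mono fun y hy => hy.1) fun y hy => hΦ y hy.1
  obtain ⟨C₁, hC₁, hint⟩ := h.interior (r / (2 * D)) (by positivity)
  obtain ⟨C₂, hC₂, hdecay⟩ := h.boundary_decay r hr
  refine ⟨(C₁ * D / m + C₂ * D ^ (d - 1)).toNNReal, fun x hx hrx y hy hxy => ?_⟩
  rw [Real.coe_toNNReal _ (by positivity)]
  have hdist : 0 < dist x y := dist_pos.2 hxy
  have hdistD : dist x y ≤ D := (dist_le_diam_of_mem hb hx hy).trans (by simp [hD])
  have hΦy := hΦ y hy
  rcases lt_or_ge (infDist y (frontier Ω)) (r / 2) with hry | hry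
  · have hpow : 1 ≤ D ^ (d - 1) * dist x y ^ (1 - d) := by
      rw [← neg_sub d, Real.rpow_neg hdist.le, ← div_eq_mul_inv, one_le_div (by positivity)]
      exact Real.rpow_le_rpow hdist.le hdistD (sub_nonneg.2 hd)
    calc G x y ≤ C₂ * Φ y := (h.symm x hx y hy).trans_le (hdecay y hy x hx hrx hry)
      _ ≤ C₂ * Φ y * (D ^ (d - 1) * dist x y ^ (1 - d)) :=
          le_mul_of_one_le_right (by positivity) hpow
      _ = C₂ * D ^ (d - 1) * dist x y ^ (1 - d) * Φ y := by ring
      _ ≤ (C₁ * D / m + C₂ * D ^ (d - 1)) * dist x y ^ (1 - d) * Φ y := by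
          gcongr
          exact le_add_of_nonneg_left (by positivity)
  · have hclose : dist x y ≤
        (r / (2 * D))⁻¹ * min (infDist x (frontier Ω)) (infDist y (frontier Ω)) := by
      calc dist x y ≤ (r / (2 * D))⁻¹ * (r / 2) := hdistD.trans_eq (by field_simp)
        _ ≤ _ := by gcongr; exact le_min (by linarith) hry
    calc G x y ≤ C₁ * dist x y ^ (1 + (1 - d)) := by
          convert (hint x hx y hy hdist hclose).2 using 3
          ring
      _ = C₁ * (dist x y * dist x y ^ (1 - d)) * 1 := by
          rw [Real.rpow_add hdist, Real.rpow_one, mul_one]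
      _ ≤ C₁ * (D * dist x y ^ (1 - d)) * (Φ y / m) := by
          gcongr
          exact (one_le_div hm).2 (hmΦ y ⟨hy, hry⟩)
      _ = C₁ * D / m * dist x y ^ (1 - d) * Φ y := by ring
      _ ≤ (C₁ * D / m + C₂ * D ^ (d - 1)) * dist x y ^ (1 - d) * Φ y := by
          gcongr
          exact le_add_of_nonneg_right (by positivity)

theorem exists_weight_mul_le_of_le_infDist (h : GreenEstimates d Ω Φ G α αs a c₀ β₁)
    (hd : 1 ≤ d) (ho : IsOpen Ω) (hb : Bornology.IsBounded Ω) (hΦc : ContinuousOn Φ Ω)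
    (hΦ : ∀ y ∈ Ω, 0 < Φ y) {r : ℝ} (hr : 0 < r) :
    ∃ C : ℝ≥0, ∀ x ∈ Ω, r ≤ infDist x (frontier Ω) → ∀ y ∈ Ω, x ≠ y →
      Φ x / infDist x (frontier Ω) * G x y ≤ C * dist x y ^ (1 - d) * Φ y := by
  obtain ⟨M, hM⟩ := (isCompact_le_infDist_frontier ho hb hr).bddAbove_image
    (hΦc.mono fun x hx => hx.1)
  obtain ⟨C, hC⟩ := h.exists_le_mul_rpow_dist_of_le_infDist hd ho hb hΦc hΦ hr
  refine ⟨M.toNNReal / r.toNNReal * C, fun x hx hrx y hy hxy => ?_⟩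
  calc Φ x / infDist x (frontier Ω) * G x y
      ≤ M.toNNReal / r * G x y := by
        gcongr
        · exact (h.pos x hx y hy hxy).le
        · exact (hM ⟨x, ⟨hx, hrx⟩, rfl⟩).trans (Real.le_coe_toNNReal M)
    _ ≤ M.toNNReal / r * (C * dist x y ^ (1 - d) * Φ y) := by
        gcongr
        exact hC x hx hrx y hy hxy
    _ = _ := by
        push_cast
        rw [Real.coe_toNNReal r hr.le]
        ring

end Pointwise

section Integrals

variable {E : Type*} [NormedAddCommGroup E] [NormedSpace ℝ E] [FiniteDimensional ℝ E] {d : ℝ}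
  {Ω : Set E} {Φ : E → ℝ} {G : E → E → ℝ} {α αs a c₀ β₁ : ℝ}

theorem exists_eventually_le_mul_weight_mul_of_mem_frontier
    (h : GreenEstimates d Ω Φ G α αs a c₀ β₁) (hd : 2 ≤ d) (ho : IsOpen Ω) (hΩ : HasC1Boundary Ω)
    (ha : 2 ≤ a) (hc₀ : 0 < c₀) (hβ₁ : 0 < β₁) (hΦ : ∀ y ∈ Ω, 0 < Φ y) {p : E}
    (hp : p ∈ frontier Ω) :
    ∃ x, ∀ᶠ q in 𝓝 x ×ˢ 𝓝[Ω] p, q.1 ∈ Ω ∧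
      (q.1 ≠ q.2 → Φ q.2 ≤ c₀ * (Φ q.1 / infDist q.1 (frontier Ω) * G q.1 q.2)) := by
  have ha0 : 0 < a := two_pos.trans_le ha
  obtain ⟨x, hx, hδx, hxp⟩ := hΩ.exists_dist_lt_two_mul_infDist ho hp
    (lt_min hβ₁ (inv_pos.2 ha0))
  set δ : E → ℝ := (infDist · (frontier Ω))
  have hδc : Continuous δ := continuous_infDist_pt _
  have hdist : ∀ᶠ q : E × E in 𝓝 x ×ˢ 𝓝[Ω] p, dist q.1 q.2 < 2 * δ q.1 := by
    refine Filter.prod_mono_right _ nhdsWithin_le_nhds ?_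
    rw [← nhds_prod_eq]
    exact continuous_dist.continuousAt.eventually_lt
      (hδc.fst'.const_mul 2).continuousAt hxp
  refine ⟨x, ?_⟩
  filter_upwards [hdist, ((ho.eventually_mem hx).and
    (hδc.continuousAt.eventually_lt_const hδx)).prod_mk self_mem_nhdsWithin]
    with q hq ⟨⟨hq₁, hδ₁⟩, hq₂⟩
  have hδpos : 0 < δ q.1 := infDist_frontier_pos ho ⟨p, hp⟩ hq₁
  refine ⟨hq₁, fun hne => h.le_mul_weight_mul hd (one_le_two.trans ha) hc₀ hq₁
    ⟨hδpos, hδ₁.trans_le (min_le_left _ _)⟩ ?_ hq₂ (hΦ _ hq₂).le hne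
    (hq.trans_le (by gcongr))⟩
  exact (le_inv_mul_iff₀ ha0).1 (by simpa using (hδ₁.trans_le (min_le_right _ _)).le)

variable [MeasurableSpace E] [BorelSpace E] {μ : Measure E} [μ.IsAddHaarMeasure]

theorem exists_setLIntegral_boundaryLayer_le
    (h : GreenEstimates (finrank ℝ E) Ω Φ G α αs a c₀ β₁)
    (hE : 2 ≤ finrank ℝ E) (ho : IsOpen Ω) (hb : Bornology.IsBounded Ω) (hΩ : HasC1Boundary Ω)
    (hne : (frontier Ω).Nonempty) (hα : 1 / 2 < α) (hαs : α - 1 / 2 < αs) (hαs' : αs ≤ α)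
    (ha : 1 ≤ a) (hc₀ : 0 < c₀) (hβ₁ : 0 < β₁) (hΦ : ∀ y ∈ Ω, 0 < Φ y) :
    ∃ r > 0, ∃ C : ℝ≥0, ∀ y ∈ Ω,
      ∫⁻ x in boundaryLayer Ω r, ENNReal.ofReal (Φ x / infDist x (frontier Ω) * G x y) ∂μ ≤
        C * ENNReal.ofReal (Φ y) := by
  have hE' : (2 : ℝ) ≤ finrank ℝ E := mod_cast hE
  have : Nontrivial E := finrank_pos_iff (R := ℝ).1 (by omega)
  set s₁ : ℝ := finrank ℝ E - 1 - (αs - α + 1 / 2) with hs₁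
  set s₂ : ℝ := finrank ℝ E - 1
  obtain ⟨ρ, hρ, C₁, hC₁⟩ := hΩ.exists_setLIntegral_rpow_infDist_mul_edist_rpow_neg_le (μ := μ) ho
    hb hne (q := αs - α - 1 / 2) (s := s₁) (by linarith) (by linarith) (by linarith)
  obtain ⟨C₂, hC₂⟩ := exists_setLIntegral_edist_rpow_neg_le μ (s := s₂) (by linarith)
    (by linarith) hb
  refine ⟨min ρ β₁, lt_min hρ hβ₁, c₀.toNNReal * (a.toNNReal * C₂ + C₁), fun y hy => ?_⟩
  have hA : MeasurableSet (boundaryLayer Ω (min ρ β₁)) := measurableSet_boundaryLayer ho _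
  calc ∫⁻ x in boundaryLayer Ω (min ρ β₁),
        ENNReal.ofReal (Φ x / infDist x (frontier Ω) * G x y) ∂μ
      ≤ ∫⁻ x in boundaryLayer Ω (min ρ β₁), c₀.toNNReal * (a.toNNReal * edist x y ^ (-s₂) +
          ENNReal.ofReal (infDist x (frontier Ω) ^ (αs - α - 1 / 2)) * edist x y ^ (-s₁)) *
            ENNReal.ofReal (Φ y) ∂μ := by
        refine setLIntegral_mono_ae' hA ?_
        filter_upwards [measure_eq_zero_iff_ae_notMem.1 (measure_singleton (μ := μ) y)]
          with x hxy hx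
        convert h.ofReal_weight_mul_le_of_mem_boundaryLayer hα hαs ha hc₀.le hx.1
          ⟨infDist_frontier_pos ho hne hx.1, hx.2.trans_le (min_le_right _ _)⟩ hy (hΦ y hy).le
          hxy using 6 <;> ring
    _ = c₀.toNNReal * (a.toNNReal * ∫⁻ x in boundaryLayer Ω (min ρ β₁), edist x y ^ (-s₂) ∂μ +
          ∫⁻ x in boundaryLayer Ω (min ρ β₁),
            ENNReal.ofReal (infDist x (frontier Ω) ^ (αs - α - 1 / 2)) * edist x y ^ (-s₁) ∂μ) *
              ENNReal.ofReal (Φ y) := by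
        rw [lintegral_mul_const' _ _ ofReal_ne_top, lintegral_const_mul' _ _ coe_ne_top,
          lintegral_add_left (by fun_prop), lintegral_const_mul' _ _ coe_ne_top]
    _ ≤ c₀.toNNReal * (a.toNNReal * C₂ + C₁) * ENNReal.ofReal (Φ y) := by
        gcongr
        · exact (lintegral_mono_set fun x hx => hx.1).trans (hC₂ y)
        · refine le_trans (lintegral_mono_set ?_) (hC₁ y)
          exact fun x hx => ⟨hx.1, hx.2.trans_le (min_le_left _ _)⟩
    _ = _ := by push_cast; rfl

theorem exists_setLIntegral_le (h : GreenEstimates (finrank ℝ E) Ω Φ G α αs a c₀ β₁)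
    (hE : 2 ≤ finrank ℝ E) (ho : IsOpen Ω) (hb : Bornology.IsBounded Ω) (hΩ : HasC1Boundary Ω)
    (hne : (frontier Ω).Nonempty) (hα : 1 / 2 < α) (hαs : α - 1 / 2 < αs) (hαs' : αs ≤ α)
    (ha : 1 ≤ a) (hc₀ : 0 < c₀) (hβ₁ : 0 < β₁) (hΦc : ContinuousOn Φ Ω) (hΦ : ∀ y ∈ Ω, 0 < Φ y) :
    ∃ C : ℝ≥0, ∀ y ∈ Ω,
      ∫⁻ x in Ω, ENNReal.ofReal (Φ x / infDist x (frontier Ω) * G x y) ∂μ ≤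
        C * ENNReal.ofReal (Φ y) := by
  have hE' : (2 : ℝ) ≤ finrank ℝ E := mod_cast hE
  have : Nontrivial E := finrank_pos_iff (R := ℝ).1 (by omega)
  obtain ⟨r, hr, C₁, hC₁⟩ := h.exists_setLIntegral_boundaryLayer_le (μ := μ) hE ho hb hΩ hne hα
    hαs hαs' ha hc₀ hβ₁ hΦ
  obtain ⟨C₂, hC₂⟩ := h.exists_weight_mul_le_of_le_infDist (by linarith) ho hb hΦc hΦ hr
  obtain ⟨C₃, hC₃⟩ := exists_setLIntegral_edist_rpow_neg_le μ (s := finrank ℝ E - 1)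
    (by linarith) (by linarith) hb
  set S := {x ∈ Ω | r ≤ infDist x (frontier Ω)}
  have hS : MeasurableSet S := (isCompact_le_infDist_frontier ho hb hr).measurableSet
  refine ⟨C₁ + C₂ * C₃, fun y hy => ?_⟩
  have hcore : ∫⁻ x in S, ENNReal.ofReal (Φ x / infDist x (frontier Ω) * G x y) ∂μ ≤
      C₂ * C₃ * ENNReal.ofReal (Φ y) := by
    calc ∫⁻ x in S, ENNReal.ofReal (Φ x / infDist x (frontier Ω) * G x y) ∂μ
        ≤ ∫⁻ x in S, C₂ * edist x y ^ (-((finrank ℝ E : ℝ) - 1)) * ENNReal.ofReal (Φ y) ∂μ := by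
          refine setLIntegral_mono_ae' hS ?_
          filter_upwards [measure_eq_zero_iff_ae_notMem.1 (measure_singleton (μ := μ) y)]
            with x hxy hx
          refine (ofReal_le_ofReal (hC₂ x hx.1 hx.2 y hy hxy)).trans_eq ?_
          rw [ofReal_mul (by positivity), ofReal_mul C₂.coe_nonneg, ofReal_coe_nnreal,
            ofReal_dist_rpow hxy, neg_sub]
      _ ≤ C₂ * C₃ * ENNReal.ofReal (Φ y) := by
          rw [lintegral_mul_const' _ _ ofReal_ne_top, lintegral_const_mul' _ _ coe_ne_top]
          gcongr
          exact (lintegral_mono_set fun x hx => hx.1).trans (hC₃ y)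
  have hcover : Ω ⊆ boundaryLayer Ω r ∪ S := fun x hx =>
    (lt_or_ge (infDist x (frontier Ω)) r).imp (fun h => ⟨hx, h⟩) fun h => ⟨hx, h⟩
  calc ∫⁻ x in Ω, ENNReal.ofReal (Φ x / infDist x (frontier Ω) * G x y) ∂μ
      ≤ ∫⁻ x in boundaryLayer Ω r ∪ S,
          ENNReal.ofReal (Φ x / infDist x (frontier Ω) * G x y) ∂μ := lintegral_mono_set hcover
    _ ≤ _ := lintegral_union_le _ _ _
    _ ≤ _ := add_le_add (hC₁ y hy) hcore
    _ = _ := by push_cast; ring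

theorem exists_le_mul_setLIntegral [Nontrivial E] (h : GreenEstimates d Ω Φ G α αs a c₀ β₁)
    (hd : 2 ≤ d) (ho : IsOpen Ω) (hb : Bornology.IsBounded Ω) (hΩ : HasC1Boundary Ω)
    (hne : (frontier Ω).Nonempty) (ha : 2 ≤ a) (hc₀ : 0 < c₀) (hβ₁ : 0 < β₁)
    (hΦc : ContinuousOn Φ Ω) (hΦ : ∀ y ∈ Ω, 0 < Φ y) :
    ∃ C : ℝ≥0, ∀ y ∈ Ω, ENNReal.ofReal (Φ y) ≤
      C * ∫⁻ x in Ω, ENNReal.ofReal (Φ x / infDist x (frontier Ω) * G x y) ∂μ := by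
  refine exists_ofReal_le_mul_setLIntegral hb.isCompact_closure subset_closure
    (f := fun x y => Φ x / infDist x (frontier Ω) * G x y) fun p hp => ?_
  rcases em (p ∈ Ω) with hpΩ | hpΩ
  · exact ⟨p, h.exists_eventually_le_mul_weight_mul_of_mem hd ho hne hΦc hΦ hpΩ⟩
  · obtain ⟨x₀, hx₀⟩ := h.exists_eventually_le_mul_weight_mul_of_mem_frontier hd ho hΩ ha hc₀ hβ₁
      hΦ (ho.frontier_eq.symm ▸ mem_sdiff_of_mem hp hpΩ)
    exact ⟨x₀, c₀, hc₀.le, hx₀⟩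

theorem exists_comparableWith (h : GreenEstimates (finrank ℝ E) Ω Φ G α αs a c₀ β₁)
    (hE : 2 ≤ finrank ℝ E) (ho : IsOpen Ω) (hb : Bornology.IsBounded Ω) (hΩ : HasC1Boundary Ω)
    (hne : (frontier Ω).Nonempty) (hα : 1 / 2 < α) (hαs : α - 1 / 2 < αs) (hαs' : αs ≤ α)
    (ha : 2 ≤ a) (hc₀ : 0 < c₀) (hβ₁ : 0 < β₁) (hΦc : ContinuousOn Φ Ω) (hΦ : ∀ y ∈ Ω, 0 < Φ y) :
    ∃ C : ℝ≥0, ∀ y ∈ Ω, ComparableWith C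
      (∫⁻ x in Ω, ENNReal.ofReal (Φ x / infDist x (frontier Ω) * G x y) ∂μ)
      (ENNReal.ofReal (Φ y)) := by
  have : Nontrivial E := finrank_pos_iff (R := ℝ).1 (by omega)
  obtain ⟨C, hC⟩ := h.exists_setLIntegral_le (μ := μ) hE ho hb hΩ hne hα hαs hαs' (by linarith)
    hc₀ hβ₁ hΦc hΦ
  obtain ⟨D, hD⟩ := h.exists_le_mul_setLIntegral (μ := μ) (mod_cast hE) ho hb hΩ hne ha hc₀ hβ₁
    hΦc hΦ
  exact ⟨max C D, fun y hy => .of_le_mul (hC y hy) (hD y hy)⟩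

end Integrals

end GreenEstimates

section WeightedEstimate

theorem comparableWith_setLIntegral_div_mul {X : Type*} [PseudoMetricSpace X]
    [MeasurableSpace X] {μ : Measure X} {Ω s : Set X} {Φ Φ₀ u : X → ℝ} {cs : ℝ≥0} (ho : IsOpen Ω)
    (hne : (frontier Ω).Nonempty) (hs : MeasurableSet s) (hsΩ : s ⊆ Ω) (hΦ : ∀ x ∈ Ω, 0 ≤ Φ x)
    (hcs : 0 < cs)
    (hΦ₀ : ∀ x ∈ Ω, (cs : ℝ)⁻¹ * infDist x (frontier Ω) ≤ Φ₀ x ∧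
      Φ₀ x ≤ cs * infDist x (frontier Ω)) (hu : ∀ x ∈ Ω, 0 ≤ u x) :
    ComparableWith cs (∫⁻ x in s, ENNReal.ofReal (Φ x / Φ₀ x * u x) ∂μ)
      (∫⁻ x in s, ENNReal.ofReal (Φ x / infDist x (frontier Ω) * u x) ∂μ) :=
  .lintegral <| ae_restrict_of_forall_mem hs fun x hx => comparableWith_ofReal_div_mul hcs
    (hΦ x (hsΩ hx)) (hu x (hsΩ hx)) (infDist_frontier_pos ho hne (hsΩ hx)) (hΦ₀ x (hsΩ hx)).1
    (hΦ₀ x (hsΩ hx)).2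

variable {E : Type*} [NormedAddCommGroup E] [NormedSpace ℝ E] [FiniteDimensional ℝ E]
  [MeasurableSpace E] [BorelSpace E] {μ : Measure E} [μ.IsAddHaarMeasure] {Ω : Set E}
  {Φ Φ₀ : E → ℝ} {G K : E → E → ℝ} {C₀ ε : ℝ}

theorem HasC1Boundary.exists_comparableWith_one (hE : 2 ≤ finrank ℝ E) (ho : IsOpen Ω)
    (hb : Bornology.IsBounded Ω) (hΩ : HasC1Boundary Ω) (hne : (frontier Ω).Nonempty)
    (hΦc : ContinuousOn Φ Ω) (hΦ : ∀ x ∈ Ω, 0 < Φ x) {cs : ℝ≥0} (hcs : 0 < cs)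
    (hΦ₀ : ∀ x ∈ Ω, (cs : ℝ)⁻¹ * infDist x (frontier Ω) ≤ Φ₀ x ∧
      Φ₀ x ≤ cs * infDist x (frontier Ω))
    (hKc : ContinuousOn (Function.uncurry K) (Ω ×ˢ frontier Ω))
    (hKpos : ∀ x ∈ Ω, ∀ y ∈ frontier Ω, 0 < K x y) (hε : 0 < ε)
    (hK : ∀ y ∈ frontier Ω, ∀ β ∈ Ioo 0 ε, ∫⁻ x in levelSurface Ω β,
      ENNReal.ofReal (Φ x / Φ₀ x * K x y) ∂μH[finrank ℝ E - 1] ≤ ENNReal.ofReal C₀) :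
    ∃ C : ℝ≥0, ∀ y ∈ frontier Ω, ComparableWith C
      (∫⁻ x in Ω, ENNReal.ofReal (Φ x / infDist x (frontier Ω) * K x y) ∂μ) 1 := by
  have : Nontrivial E := finrank_pos_iff (R := ℝ).1 (by omega)
  have hδ : ∀ x ∈ Ω, 0 < infDist x (frontier Ω) := fun x => infDist_frontier_pos ho hne
  have hcont : ContinuousOn (Function.uncurry fun x y => Φ x / infDist x (frontier Ω) * K x y)
      (Ω ×ˢ frontier Ω) :=
    ((hΦc.div (continuous_infDist_pt _).continuousOn fun x hx => (hδ x hx).ne').comp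
      continuousOn_fst fun q hq => hq.1).mul hKc
  obtain ⟨C, hC⟩ := hΩ.exists_setLIntegral_le_of_levelSurface_le (μ := μ) ho hb hne hE hcont
    (C₀ := cs * C₀.toNNReal) hε fun y hy β hβ => by
      rw [ENNReal.coe_mul]
      refine (comparableWith_setLIntegral_div_mul ho hne (measurableSet_levelSurface ho β)
        (fun x hx => hx.1) (fun x hx => (hΦ x hx).le) hcs hΦ₀
        fun x hx => (hKpos x hx y hy).le).2.trans ?_
      gcongr
      exact hK y hy β hβ
  obtain ⟨D, hD⟩ := exists_one_le_mul_setLIntegral (μ := μ) ho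
    (nonempty_iff_ne_empty.2 fun h => by simp [h] at hne)
    (hb.isCompact_closure.of_isClosed_subset isClosed_frontier frontier_subset_closure) hcont
    fun x hx y hy => mul_pos (div_pos (hΦ x hx) (hδ x hx)) (hKpos x hx y hy)
  exact ⟨max C D, fun y hy => .of_le_mul (by rw [mul_one]; exact hC y hy) (hD y hy)⟩

theorem comparableWith_of_representation {X : Type*} [TopologicalSpace X]
    [SecondCountableTopology X] [MeasurableSpace X] [BorelSpace X] {μ τ ν : Measure X} [SFinite μ]
    [SFinite ν] {Ω S : Set X} (hΩ : MeasurableSet Ω) (hS : MeasurableSet S) {w Φ u : X → ℝ}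
    {G K : X → X → ℝ} {A B : ℝ≥0} (hw : ContinuousOn w Ω) (hwpos : ∀ x ∈ Ω, 0 ≤ w x)
    (hGm : Measurable (Function.uncurry G)) (hKc : ContinuousOn (Function.uncurry K) (Ω ×ˢ S))
    (hΦc : ContinuousOn Φ Ω) (hΦ : ∀ x ∈ Ω, 0 < Φ x)
    (hG : ∀ y ∈ Ω, ComparableWith A (∫⁻ x in Ω, ENNReal.ofReal (w x * G x y) ∂μ)
      (ENNReal.ofReal (Φ y)))
    (hK : ∀ y ∈ S, ComparableWith B (∫⁻ x in Ω, ENNReal.ofReal (w x * K x y) ∂μ) 1)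
    (hτ : ∫⁻ x in Ω, ENNReal.ofReal (Φ x) ∂τ ≠ ⊤) (hu : Measurable u)
    (hrep : ∀ x ∈ Ω, ENNReal.ofReal (u x) + ∫⁻ y in Ω, ENNReal.ofReal (G x y) ∂τ =
      ∫⁻ y in S, ENNReal.ofReal (K x y) ∂ν) :
    ComparableWith (max 1 A * B) (∫⁻ x in Ω, ENNReal.ofReal (w x * u x) ∂μ +
      ∫⁻ x in Ω, ENNReal.ofReal (Φ x) ∂τ) (ν S) := by
  have : SFinite (τ.restrict Ω) := sFinite_of_lintegral_ne_top (hΦc.aemeasurable hΩ).ennreal_ofReal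
    (ae_restrict_of_forall_mem hΩ fun x hx => (ofReal_pos.2 (hΦ x hx)).ne') (by simp) hτ
  have hwm : AEMeasurable w (μ.restrict Ω) := hw.aemeasurable hΩ
  have hKm : AEMeasurable (Function.uncurry K) ((μ.restrict Ω).prod (ν.restrict S)) := by
    rw [Measure.prod_restrict]
    exact hKc.aemeasurable (hΩ.prod hS)
  rw [← Measure.restrict_apply_univ S]
  exact comparableWith_lintegral_add_lintegral_measure_univ
    (ae_restrict_of_forall_mem hΩ hwpos) (hwm.mul hu.aemeasurable)
    (hwm.comp_fst.mul hGm.aemeasurable) (hwm.comp_fst.mul hKm) (ae_restrict_of_forall_mem hΩ hG)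
    (ae_restrict_of_forall_mem hS hK) (ae_restrict_of_forall_mem hΩ hrep)

theorem stmt7_general {N : ℕ} {α αs a c₀ β₁ cs : ℝ} (hE : finrank ℝ E = N) (hN : 2 ≤ N)
    (ho : IsOpen Ω) (hb : Bornology.IsBounded Ω) (hΩ : HasC1Boundary Ω) (hα : 1 / 2 < α)
    (hαs : α - 1 / 2 < αs) (hαs' : αs ≤ α) (ha : 2 ≤ a) (hc₀ : 0 < c₀) (hβ₁ : 0 < β₁)
    (h : GreenEstimates N Ω Φ G α αs a c₀ β₁) (hGm : Measurable (Function.uncurry G))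
    (hΦc : ContinuousOn Φ Ω) (hΦ : ∀ x ∈ Ω, 0 < Φ x) (hcs : 0 < cs)
    (hΦ₀ : ∀ x ∈ Ω, cs⁻¹ * infDist x (frontier Ω) ≤ Φ₀ x ∧ Φ₀ x ≤ cs * infDist x (frontier Ω))
    (hKc : ContinuousOn (Function.uncurry K) (Ω ×ˢ frontier Ω))
    (hKpos : ∀ x ∈ Ω, ∀ y ∈ frontier Ω, 0 < K x y) (hε : 0 < ε)
    (hK : ∀ y ∈ frontier Ω, ∀ β ∈ Ioo 0 ε, ∫⁻ x in levelSurface Ω β,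
      ENNReal.ofReal (Φ x / Φ₀ x * K x y) ∂μH[(N : ℝ) - 1] ≤ ENNReal.ofReal C₀) :
    ∃ C : ℝ, 1 ≤ C ∧ ∀ (τ ν : Measure E) [SFinite ν], ∫⁻ x in Ω, ENNReal.ofReal (Φ x) ∂τ < ⊤ →
      ∀ u : E → ℝ, Measurable u → (∀ x ∈ Ω, 0 ≤ u x) →
        (∀ x ∈ Ω, ENNReal.ofReal (u x) + ∫⁻ y in Ω, ENNReal.ofReal (G x y) ∂τ =
          ∫⁻ y in frontier Ω, ENNReal.ofReal (K x y) ∂ν) →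
        ENNReal.ofReal C⁻¹ * ν (frontier Ω) ≤
            ∫⁻ x in Ω, ENNReal.ofReal (Φ x / Φ₀ x * u x) ∂μ + ∫⁻ x in Ω, ENNReal.ofReal (Φ x) ∂τ ∧
          ∫⁻ x in Ω, ENNReal.ofReal (Φ x / Φ₀ x * u x) ∂μ + ∫⁻ x in Ω, ENNReal.ofReal (Φ x) ∂τ ≤
            ENNReal.ofReal C * ν (frontier Ω) := by
  subst hE
  have : Nontrivial E := finrank_pos_iff (R := ℝ).1 (by omega)
  lift cs to ℝ≥0 using hcs.le
  rcases (frontier Ω).eq_empty_or_nonempty with hempty | hne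
  · have hΩ0 : Ω = ∅ := (frontier_eq_empty_iff.1 hempty).resolve_right fun hu =>
      NormedSpace.unbounded_univ ℝ E (hu ▸ hb)
    exact ⟨1, le_rfl, by simp [hΩ0]⟩
  obtain ⟨A, hA⟩ := h.exists_comparableWith (μ := μ) hN ho hb hΩ hne hα hαs hαs' ha hc₀ hβ₁ hΦc hΦ
  obtain ⟨B, hB⟩ := hΩ.exists_comparableWith_one (μ := μ) hN ho hb hne hΦc hΦ hcs hΦ₀ hKc hKpos
    hε hK
  have hδ : ∀ x ∈ Ω, 0 < infDist x (frontier Ω) := fun x => infDist_frontier_pos ho hne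
  have hw : ContinuousOn (fun x => Φ x / infDist x (frontier Ω)) Ω :=
    hΦc.div (continuous_infDist_pt _).continuousOn fun x hx => (hδ x hx).ne'
  refine ⟨_, le_max_left 1 _, fun τ ν _ hτ u hum hu hrep => ComparableWith.ofReal_max_one <|
    ((comparableWith_setLIntegral_div_mul ho hne ho.measurableSet Subset.rfl
      (fun x hx => (hΦ x hx).le) hcs hΦ₀ hu).add (.refl _)).trans <|
    comparableWith_of_representation ho.measurableSet isClosed_frontier.measurableSet hw
      (fun x hx => (div_pos (hΦ x hx) (hδ x hx)).le) hGm hKc hΦc hΦ hA hB hτ.ne hum hrep⟩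

end WeightedEstimate

theorem stmt7 {N : ℕ} (hN : 3 ≤ N) (Ω : Set (EuclideanSpace ℝ (Fin N)))
    (hΩo : IsOpen Ω) (hΩb : Bornology.IsBounded Ω) (hΩ2 : HasC2Boundary Ω)
    (α αs : ℝ) (hα : 0 < α - 1/2) (hαs : α - 1/2 < αs) (hαs' : αs ≤ α)
    (Φ Φ₀ : EuclideanSpace ℝ (Fin N) → ℝ)
    (G : EuclideanSpace ℝ (Fin N) → EuclideanSpace ℝ (Fin N) → ℝ)
    (K : EuclideanSpace ℝ (Fin N) → EuclideanSpace ℝ (Fin N) → ℝ)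
    (hGm : Measurable (Function.uncurry G))
    (hGpos : ∀ x ∈ Ω, ∀ y ∈ Ω, x ≠ y → 0 < G x y)
    (a c₀ β₁ : ℝ) (ha : 2 ≤ a) (hc₀ : 1 ≤ c₀) (hβ₁ : 0 < β₁)
    -- (H1): two-sided boundary Green estimate near the diagonal
    (hG1 : ∀ β ∈ Set.Ioo (0:ℝ) β₁, ∀ x ∈ Ω, Metric.infDist x (frontier Ω) = β →
      ∀ y ∈ Ω, 0 < dist x y → dist x y < a * β →
        c₀⁻¹ * dist x y ^ ((2:ℝ) - N) * Φ y ≤ Φ x * G x y ∧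
        Φ x * G x y ≤ c₀ * dist x y ^ ((2:ℝ) - N) * Φ y)
    -- (H2): upper boundary Green estimate away from the diagonal
    (hG2 : ∀ β ∈ Set.Ioo (0:ℝ) β₁, ∀ x ∈ Ω, Metric.infDist x (frontier Ω) = β →
      ∀ y ∈ Ω, a * β ≤ dist x y →
        Φ x * G x y ≤ c₀ * β ^ (2 * αs) * dist x y ^ ((2:ℝ) - N - 2 * α) * Φ y)
    -- (H3): two-sided interior Green estimate
    (hG3 : ∀ b : ℝ, 0 < b → ∃ Cb : ℝ, 1 ≤ Cb ∧ ∀ x ∈ Ω, ∀ y ∈ Ω,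
      0 < dist x y →
      dist x y ≤ b⁻¹ * min (Metric.infDist x (frontier Ω)) (Metric.infDist y (frontier Ω)) →
      Cb⁻¹ * dist x y ^ ((2:ℝ) - N) ≤ G x y ∧ G x y ≤ Cb * dist x y ^ ((2:ℝ) - N))
    -- (H4): symmetry and comparison with the ground state near the boundary
    (hGsym : ∀ x ∈ Ω, ∀ y ∈ Ω, G x y = G y x)
    (hG4 : ∀ r : ℝ, 0 < r → ∃ Cr : ℝ, 0 < Cr ∧ ∀ x ∈ Ω, ∀ y ∈ Ω,
      r ≤ Metric.infDist y (frontier Ω) → Metric.infDist x (frontier Ω) < r / 2 →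
      G x y ≤ Cr * Φ x)
    -- (H5): condition (B2) on the ground state
    (hΦc : ContinuousOn Φ Ω) (hΦpos : ∀ x ∈ Ω, 0 < Φ x)
    (c₁ : ℝ) (hc₁ : 1 ≤ c₁)
    (hΦ : ∀ x ∈ Ω, Metric.infDist x (frontier Ω) < β₁ →
      c₁⁻¹ * Metric.infDist x (frontier Ω) ^ α ≤ Φ x ∧
      Φ x ≤ c₁ * Metric.infDist x (frontier Ω) ^ αs)
    -- (H6): `Φ₀ ∼ δ`
    (cs : ℝ) (hcs : 1 ≤ cs)
    (hΦ₀ : ∀ x ∈ Ω, cs⁻¹ * Metric.infDist x (frontier Ω) ≤ Φ₀ x ∧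
      Φ₀ x ≤ cs * Metric.infDist x (frontier Ω))
    (hΦ₀pos : ∀ x ∈ Ω, 0 < Φ₀ x)
    -- (H7): Martin kernel bound
    (hKc : ContinuousOn (Function.uncurry K) (Ω ×ˢ frontier Ω))
    (hKpos : ∀ x ∈ Ω, ∀ y ∈ frontier Ω, 0 < K x y)
    (C₀ ε : ℝ) (hC₀ : 1 ≤ C₀) (hε : 0 < ε)
    (hKbound : ∀ y ∈ frontier Ω, ∀ β ∈ Set.Ioo (0:ℝ) ε,
      ENNReal.ofReal C₀⁻¹ ≤
        (∫⁻ x in {x ∈ Ω | Metric.infDist x (frontier Ω) = β},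
          ENNReal.ofReal (Φ x / Φ₀ x * K x y) ∂(μH[(N:ℝ) - 1])) ∧
      (∫⁻ x in {x ∈ Ω | Metric.infDist x (frontier Ω) = β},
          ENNReal.ofReal (Φ x / Φ₀ x * K x y) ∂(μH[(N:ℝ) - 1])) ≤ ENNReal.ofReal C₀) :
    -- conclusion: two-sided weighted estimate of a subharmonic `u` with `u + G[τ] = K[ν]`
    ∃ C : ℝ, 1 ≤ C ∧
      ∀ (τ ν : Measure (EuclideanSpace ℝ (Fin N))), τ Ωᶜ = 0 →
        (∫⁻ x in Ω, ENNReal.ofReal (Φ x) ∂τ) < ⊤ →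
        IsFiniteMeasure ν → ν (frontier Ω)ᶜ = 0 →
        ∀ u : EuclideanSpace ℝ (Fin N) → ℝ, Measurable u → (∀ x ∈ Ω, 0 ≤ u x) →
          (∀ x ∈ Ω, ENNReal.ofReal (u x) + (∫⁻ y in Ω, ENNReal.ofReal (G x y) ∂τ) =
            (∫⁻ y in frontier Ω, ENNReal.ofReal (K x y) ∂ν)) →
          ENNReal.ofReal C⁻¹ * ν (frontier Ω) ≤
            (∫⁻ x in Ω, ENNReal.ofReal (Φ x / Φ₀ x * u x) ∂volume) +
              (∫⁻ x in Ω, ENNReal.ofReal (Φ x) ∂τ) ∧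
          (∫⁻ x in Ω, ENNReal.ofReal (Φ x / Φ₀ x * u x) ∂volume) +
              (∫⁻ x in Ω, ENNReal.ofReal (Φ x) ∂τ) ≤
            ENNReal.ofReal C * ν (frontier Ω) := by
  obtain ⟨C, hC, h⟩ := stmt7_general (μ := volume) finrank_euclideanSpace_fin (by omega) hΩo hΩb
    hΩ2.hasC1Boundary (by linarith) hαs hαs' ha (by linarith) hβ₁
    ⟨hGpos, fun x hx hδ => hG1 _ hδ x hx rfl, fun x hx hδ => hG2 _ hδ x hx rfl, hG3, hGsym, hG4⟩
    hGm hΦc hΦpos (by linarith) hΦ₀ hKc hKpos hε fun y hy β hβ => (hKbound y hy β hβ).2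
  exact ⟨C, hC, fun τ ν _ hτ _ _ => h τ ν hτ⟩
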